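/- For all n ≥ 2 and all even k ≥ 2, the number of isomorphism classes of k-minimal trees on n vertices is at most t(k²), where t(m) denotes the number of isomorphism classes of trees on m vertices. -/

import Mathlib

/-- `J` is a distance-`k` independent set in `G`: any two distinct vertices of `J`
are at graph distance at least `k + 1`. -/
def DkIndep {V : Type*} (G : SimpleGraph V) (k : ℕ) (J : Set V) : Prop :=
  ∀ ⦃u⦄, u ∈ J → ∀ ⦃v⦄, v ∈ J → u ≠ v → k + 1 ≤ G.dist u v

/-- `J` is a maximal distance-`k` independent set (`k`-MDIS) of `G`. -/
def MaxDkIndep {V : Type*} (G : SimpleGraph V) (k : ℕ) (J : Set V) : Prop :=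
  DkIndep G k J ∧ ∀ J', DkIndep G k J' → J ⊆ J' → J' = J

/-- `mdi G k` is the number of maximal distance-`k` independent sets of `G`. -/
noncomputable def mdi {V : Type*} (G : SimpleGraph V) (k : ℕ) : ℕ :=
  {J : Set V | MaxDkIndep G k J}.ncard

/-- `f_k(n)` from the paper. -/
def fk (k n : ℕ) : ℕ :=
  if n ≤ k + 1 then n else n - (n - k % 2) / (k / 2 + 1) + 1

/-- closed ball `N_k[x]`. -/
def ball {V : Type*} (G : SimpleGraph V) (k : ℕ) (x : V) : Set V :=
  {v | G.dist x v ≤ k}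

/-- a leaf is a vertex of degree 1. -/
def IsLeaf {V : Type*} (G : SimpleGraph V) (v : V) : Prop :=
  (G.neighborSet v).ncard = 1

/-- eccentricity of a vertex. -/
noncomputable def ecc {V : Type*} [Fintype V] (G : SimpleGraph V) (v : V) : ℕ :=
  Finset.univ.sup (G.dist v)

/-- diameter of a finite graph. -/
noncomputable def gdiam {V : Type*} [Fintype V] (G : SimpleGraph V) : ℕ :=
  Finset.univ.sup (ecc G)

/-- a central vertex is one of minimum eccentricity. -/
def IsCentral {V : Type*} [Fintype V] (G : SimpleGraph V) (v : V) : Prop :=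
  ∀ u, ecc G v ≤ ecc G u

/-- a `k`-twin: some other vertex has the same closed `k`-ball. -/
def KTwin {V : Type*} (G : SimpleGraph V) (k : ℕ) (u : V) : Prop :=
  ∃ v, v ≠ u ∧ ball G k u = ball G k v

/-- a diametral leaf: a leaf whose eccentricity equals the diameter. -/
def IsDiametralLeaf {V : Type*} [Fintype V] (G : SimpleGraph V) (u : V) : Prop :=
  IsLeaf G u ∧ ecc G u = gdiam G

/-- a `k`-special pair. -/
def KSpecial {V : Type*} [Fintype V] (G : SimpleGraph V) (k : ℕ) (x y : V) : Prop :=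
  IsDiametralLeaf G x ∧ IsDiametralLeaf G y ∧ KTwin G k x ∧ KTwin G k y ∧
    ball G k x ≠ ball G k y

/-- `mdi*_k(G, ℓ)`. -/
noncomputable def mdiStar {V : Type*} (G : SimpleGraph V) (k : ℕ) (ℓ : V) : ℕ :=
  {J : Set V | MaxDkIndep G k J ∧ ℓ ∈ J ∧ ∃ w ∉ J, ball G k w ∩ J = {ℓ}}.ncard

/-- The spider tree `S_{p,m}`: a center (`none`) together with `p` legs of `m` vertices. -/
def spider (p m : ℕ) : SimpleGraph (Option (Fin p × Fin m)) :=
  SimpleGraph.fromRel fun a b =>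
    match a, b with
    | none, some (_, j) => (j : ℕ) = 0
    | some (i, j), some (i', j') => i = i' ∧ (j : ℕ) + 1 = (j' : ℕ)
    | _, _ => False

/-- `S'_{p,m}`: the spider `S_{p,m}` with one leaf at distance `m` from the center removed. -/
def spider' (p m : ℕ) (hp : 0 < p) (hm : 0 < m) :=
  (spider p m).induce
    {v | v ≠ some (⟨0, hp⟩, ⟨m - 1, Nat.sub_lt hm Nat.one_pos⟩)}

/-- The double spider `B_{p₁,p₂,s}`: two adjacent centers (`Sum.inl false`, `Sum.inl true`),
with `p₁` legs of `s` vertices on the first and `p₂` legs of `s` vertices on the second. -/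
def btree (p₁ p₂ s : ℕ) : SimpleGraph (Bool ⊕ ((Fin p₁ ⊕ Fin p₂) × Fin s)) :=
  SimpleGraph.fromRel fun a b =>
    match a, b with
    | Sum.inl x, Sum.inl y => x ≠ y
    | Sum.inl false, Sum.inr (Sum.inl _, j) => (j : ℕ) = 0
    | Sum.inl true, Sum.inr (Sum.inr _, j) => (j : ℕ) = 0
    | Sum.inr (c, j), Sum.inr (c', j') => c = c' ∧ (j : ℕ) + 1 = (j' : ℕ)
    | _, _ => False

/-- `G` contains a subgraph isomorphic to `H`. -/
def ContainsSub {V W : Type*} (G : SimpleGraph V) (H : SimpleGraph W) : Prop :=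
  ∃ f : W → V, Function.Injective f ∧ ∀ a b, H.Adj a b → G.Adj (f a) (f b)

/-- A pendant path on `s` vertices `P 0, …, P (s-1)` attached to `w`:
`P 0` is a leaf, consecutive vertices are adjacent, interior vertices have degree 2,
and `P (s-1)` is adjacent to `w`. -/
def IsPendantPath {V : Type*} (T : SimpleGraph V) (s : ℕ) (P : ℕ → V) (w : V) : Prop :=
  Set.InjOn P (Set.Iio s) ∧ (∀ i < s, P i ≠ w) ∧ IsLeaf T (P 0) ∧
    (∀ i, i + 1 < s → T.Adj (P i) (P (i + 1))) ∧
    (∀ i, 0 < i → i < s → (T.neighborSet (P i)).ncard = 2) ∧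
    T.Adj (P (s - 1)) w

/-- Isomorphism of simple graphs on `Fin n` as a setoid. -/
def graphSetoid (n : ℕ) : Setoid (SimpleGraph (Fin n)) where
  r G H := Nonempty (G ≃g H)
  iseqv := ⟨fun _ => ⟨SimpleGraph.Iso.refl⟩, fun ⟨e⟩ => ⟨e.symm⟩, fun ⟨e⟩ ⟨f⟩ => ⟨e.trans f⟩⟩

/-- The number of isomorphism classes of graphs in a set of graphs on `Fin n`. -/
noncomputable def numIsoClasses {n : ℕ} (S : Set (SimpleGraph (Fin n))) : ℕ :=
  ((fun G => Quotient.mk (graphSetoid n) G) '' S).ncard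



namespace KM

theorem geo {V : Type*} {G : SimpleGraph V} (hG : G.IsTree) (a b : V) (j : ℕ) (hj : j ≤ G.dist a b) :
    ∃ t, G.dist a t = j ∧ j + G.dist t b = G.dist a b := by
  obtain ⟨p, hp⟩ := hG.connected.exists_walk_length_eq_dist a b
  have h1 : G.dist a (p.getVert j) ≤ j := by
    refine (SimpleGraph.dist_le (p.take j)).trans ?_
    simp
  have h2 : G.dist (p.getVert j) b ≤ G.dist a b - j := by
    refine (SimpleGraph.dist_le (p.drop j)).trans ?_
    simp [hp]
  have h3 := hG.connected.dist_triangle (u := a) (v := p.getVert j) (w := b)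
  exact ⟨p.getVert j, by omega, by omega⟩

theorem btw_of_walk {V : Type*} {G : SimpleGraph V} (hG : G.IsTree) {a b t : V} (p : G.Walk a b)
    (hp : p.length = G.dist a b) (ht : t ∈ p.support) :
    G.dist a t + G.dist t b = G.dist a b := by
  classical
  have h1 := SimpleGraph.dist_le (p.takeUntil t ht)
  have h2 := SimpleGraph.dist_le (p.dropUntil t ht)
  have h3 := hG.connected.dist_triangle (u := a) (v := t) (w := b)
  have h4 := congrArg SimpleGraph.Walk.length (p.take_spec ht)
  rw [SimpleGraph.Walk.length_append] at h4
  omega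

theorem Kprop {V : Type*} {G : SimpleGraph V} (hG : G.IsTree) {a b t : V}
    (h : G.dist a t + G.dist t b = G.dist a b) (z : V) :
    G.dist a t + G.dist t z = G.dist a z ∨ G.dist b t + G.dist t z = G.dist b z := by
  classical
  obtain ⟨p, hp⟩ := hG.connected.exists_walk_length_eq_dist a z
  obtain ⟨q, hq⟩ := hG.connected.exists_walk_length_eq_dist b z
  obtain ⟨r1, hr1⟩ := hG.connected.exists_walk_length_eq_dist a t
  obtain ⟨r2, hr2⟩ := hG.connected.exists_walk_length_eq_dist t b
  have hr : (r1.append r2).IsPath := by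
    apply SimpleGraph.Walk.isPath_of_length_eq_dist
    rw [SimpleGraph.Walk.length_append]; omega
  have heq := hG.IsAcyclic.path_unique ⟨_, hr⟩ ⟨_, (p.append q.reverse).bypass_isPath⟩
  have heq' : r1.append r2 = (p.append q.reverse).bypass := by
    simpa using congrArg Subtype.val heq
  have ht : t ∈ (p.append q.reverse).support := by
    apply SimpleGraph.Walk.support_bypass_subset_support
    rw [← heq']; simp
  rw [SimpleGraph.Walk.mem_support_append_iff] at ht
  rcases ht with ht | ht
  · exact Or.inl (btw_of_walk hG p hp ht)
  · right
    rw [SimpleGraph.Walk.support_reverse, List.mem_reverse] at ht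
    exact btw_of_walk hG q hq ht

theorem adj_dist {V : Type*} {G : SimpleGraph V} (hG : G.IsTree) {x y : V} (h : G.Adj x y) (r : V) :
    G.dist r x = G.dist r y + 1 ∨ G.dist r y = G.dist r x + 1 := by
  have h0 := hG.dist_ne_of_adj r h
  have h1 := hG.connected.dist_triangle (u := r) (v := x) (w := y)
  have h2 := hG.connected.dist_triangle (u := r) (v := y) (w := x)
  have h3 := SimpleGraph.dist_eq_one_iff_adj.2 h
  rw [SimpleGraph.dist_comm] at h3
  have h4 := SimpleGraph.dist_eq_one_iff_adj.2 h
  omega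

theorem median {V : Type*} {G : SimpleGraph V} (hG : G.IsTree) (a b c : V) :
    ∃ t, G.dist a t + G.dist t b = G.dist a b ∧ G.dist a t + G.dist t c = G.dist a c ∧
      G.dist b t + G.dist t c = G.dist b c := by
  have key : ∀ N, ∀ t, G.dist a t + G.dist t b = G.dist a b → G.dist a t + G.dist t c = G.dist a c →
      G.dist t b = N → ∃ t, G.dist a t + G.dist t b = G.dist a b ∧ G.dist a t + G.dist t c = G.dist a c ∧
      G.dist b t + G.dist t c = G.dist b c := by
    intro N
    induction N with
    | zero =>
      intro t h1 h2 h3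
      have := hG.connected.dist_eq_zero_iff.1 h3
      subst this
      exact ⟨t, h1, h2, by simp⟩
    | succ N ih =>
      intro t h1 h2 h3
      obtain ⟨t', h4, h5⟩ := geo hG t b 1 (by omega)
      have hadj := SimpleGraph.dist_eq_one_iff_adj.1 h4
      have h6 := hG.connected.dist_triangle (u := a) (v := t) (w := t')
      have h7 := hG.connected.dist_triangle (u := a) (v := t') (w := b)
      have h8 : G.dist a t' + G.dist t' b = G.dist a b := by omega
      have e1 := G.dist_comm (u := c) (v := t)
      have e2 := G.dist_comm (u := c) (v := t')
      have e3 := G.dist_comm (u := b) (v := t)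
      have e4 := G.dist_comm (u := b) (v := t')
      rcases Kprop hG h8 c with h | h
      · exact ih t' h8 h (by omega)
      · rcases adj_dist hG hadj c with h9 | h9
        · exact ih t' h8 (by omega) (by omega)
        · exact ⟨t, h1, h2, by omega⟩
  exact key _ a (by simp) (by simp) rfl

theorem fourpt {V : Type*} {G : SimpleGraph V} (hG : G.IsTree) (a b c e : V) :
    G.dist a b + G.dist c e ≤ G.dist a c + G.dist b e ∨
    G.dist a b + G.dist c e ≤ G.dist a e + G.dist b c := by
  obtain ⟨t, h1, h2, h3⟩ := median hG a b c
  have h4 := hG.connected.dist_triangle (u := c) (v := t) (w := e)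
  have e1 := G.dist_comm (u := c) (v := t)
  have e3 := G.dist_comm (u := b) (v := t)
  rcases Kprop hG h1 e with h | h
  · right; omega
  · left; omega

theorem peo {V : Type*} {G : SimpleGraph V} (hG : G.IsTree) {v u1 u2 r : V} {k : ℕ}
    (h1 : G.dist v u1 ≤ k) (h2 : G.dist v u2 ≤ k) (h3 : G.dist r u1 ≤ G.dist r v)
    (h4 : G.dist r u2 ≤ G.dist r v) : G.dist u1 u2 ≤ k := by
  have e1 := G.dist_comm (u := u1) (v := v)
  have e2 := G.dist_comm (u := u2) (v := v)
  have e3 := G.dist_comm (u := u1) (v := r)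
  have e4 := G.dist_comm (u := u2) (v := r)
  have e5 := G.dist_comm (u := v) (v := r)
  rcases fourpt hG u1 u2 v r with h | h <;> omega

end KM


namespace KM

def Greedy {V : Type*} (G : SimpleGraph V) (k : ℕ) (r : V) (R : Finset V) : Prop :=
  (∀ u ∈ R, ∀ v ∈ R, u ≠ v → k < G.dist u v) ∧
  ∀ y, ∃ v ∈ R, G.dist v y ≤ k ∧ G.dist r y ≤ G.dist r v

theorem exists_greedy {V : Type*} [Fintype V] (G : SimpleGraph V) (k : ℕ) (r : V) :
    ∃ R, Greedy G k r R := by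
  classical
  have key : ∀ A : Finset V, ∃ R ⊆ A, (∀ u ∈ R, ∀ v ∈ R, u ≠ v → k < G.dist u v) ∧
      ∀ y ∈ A, ∃ v ∈ R, G.dist v y ≤ k ∧ G.dist r y ≤ G.dist r v := by
    intro A
    induction A using Finset.strongInduction with
    | H A ih =>
      rcases A.eq_empty_or_nonempty with rfl | hA
      · exact ⟨∅, by simp⟩
      · obtain ⟨v, hv, hmax⟩ := A.exists_max_image (G.dist r) hA
        have hss : A.filter (fun y => k < G.dist v y) ⊂ A := by
          refine Finset.filter_ssubset.2 ⟨v, hv, by simp⟩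
        obtain ⟨R, hR, hi, hd⟩ := ih _ hss
        refine ⟨insert v R, ?_, ?_, ?_⟩
        · intro x hx
          rcases Finset.mem_insert.1 hx with rfl | hx
          · exact hv
          · exact (Finset.mem_filter.1 (hR hx)).1
        · intro x hx y hy hxy
          rcases Finset.mem_insert.1 hx with rfl | hx1 <;> rcases Finset.mem_insert.1 hy with rfl | hy1
          · exact absurd rfl hxy
          · exact (Finset.mem_filter.1 (hR hy1)).2
          · rw [G.dist_comm]; exact (Finset.mem_filter.1 (hR hx1)).2
          · exact hi x hx1 y hy1 hxy
        · intro y hy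
          by_cases h : G.dist v y ≤ k
          · exact ⟨v, by simp, h, hmax y hy⟩
          · obtain ⟨u, hu, h1⟩ := hd y (Finset.mem_filter.2 ⟨hy, by omega⟩)
            exact ⟨u, by simp [hu], h1⟩
  obtain ⟨R, -, h1, h2⟩ := key Finset.univ
  exact ⟨R, h1, fun y => h2 y (Finset.mem_univ y)⟩

theorem extend {V : Type*} [Finite V] (G : SimpleGraph V) (k : ℕ) {S : Set V} (hS : DkIndep G k S) :
    ∃ J, MaxDkIndep G k J ∧ S ⊆ J := by
  obtain ⟨J, hSJ, hJ⟩ := (Set.toFinite {J : Set V | DkIndep G k J}).exists_le_maximal (a := S) hS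
  refine ⟨J, ⟨hJ.1, fun J' h1 h2 => ?_⟩, hSJ⟩
  exact (hJ.2 h1 h2).antisymm h2

theorem card_indep {V : Type*} [Fintype V] {G : SimpleGraph V} (hG : G.IsTree) (m : ℕ)
    (hn : m + 1 ≤ Fintype.card V) (R : Finset V)
    (hR : ∀ u ∈ R, ∀ v ∈ R, u ≠ v → 2 * m < G.dist u v) : R.card * (m + 1) ≤ Fintype.card V := by
  classical
  by_cases h : R.card ≤ 1
  · nlinarith
  · have hfar : ∀ v : R, ∃ u, m ≤ G.dist v u := by
      intro v
      obtain ⟨u, hu, hne⟩ := Finset.exists_mem_ne (by omega : 1 < R.card) v.1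
      exact ⟨u, by have := hR v v.2 u hu hne.symm; omega⟩
    have hpt : ∀ x : R × Fin (m + 1), ∃ t, G.dist x.1 t = x.2 := by
      rintro ⟨v, j⟩
      obtain ⟨u, hu⟩ := hfar v
      obtain ⟨t, ht, -⟩ := geo hG v.1 u j.1 (by omega)
      exact ⟨t, ht⟩
    choose f hf using hpt
    have hinj : Function.Injective f := by
      rintro ⟨v, j⟩ ⟨v', j'⟩ hx
      have h1 := hf (v, j)
      have h2 := hf (v', j')
      rw [← hx] at h2
      simp only at h1 h2
      have hv : v = v' := by
        by_contra hne
        have h3 := hR v v.2 v' v'.2 (fun h => hne (Subtype.ext h))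
        have h4 := hG.connected.dist_triangle (u := v.1) (v := f (v, j)) (w := v'.1)
        rw [G.dist_comm (u := f (v, j))] at h4
        omega
      subst hv
      ext
      · rfl
      · simp; omega
    have := Fintype.card_le_of_injective f hinj
    simpa using this

theorem counting {V : Type*} [Fintype V] {G : SimpleGraph V} (hG : G.IsTree) {k : ℕ} {r : V}
    {R : Finset V} (hR : Greedy G k r R) {q : ℕ} (hq : R.card ≤ q)
    (hmdi : mdi G k + q ≤ Fintype.card V + 1) :
    R.card = q ∧ ∀ x ∉ R, (∀ x' ∉ R, G.dist r x' ≤ G.dist r x) →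
      ∀ y z, k < G.dist x y → k < G.dist x z → y ≠ z → k < G.dist y z := by
  classical
  have hJ : ∀ x : {x // x ∉ R}, ∃ J, MaxDkIndep G k J ∧ x.1 ∈ J ∧ (∀ y ∈ J, y ∉ R → y ≠ x.1 →
      G.dist r y < G.dist r x.1) := by
    rintro ⟨x, hx⟩
    obtain ⟨J, hJ, hS⟩ := extend G k (S := insert x {v | v ∈ R ∧ k < G.dist x v}) (by
      rintro u (rfl | hu) v (rfl | hv) huv
      · exact absurd rfl huv
      · exact hv.2
      · rw [G.dist_comm]; exact hu.2
      · exact hR.1 u hu.1 v hv.1 huv)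
    refine ⟨J, hJ, hS (by simp), ?_⟩
    intro y hy hyR hyx
    obtain ⟨v, hv, h1, h2⟩ := hR.2 y
    have h3 : G.dist x v ≤ k := by
      by_contra h
      have : v ∈ J := hS (Or.inr ⟨hv, by omega⟩)
      have := hJ.1 this hy (fun h => hyR (h ▸ hv))
      omega
    by_contra h4
    simp only at h4
    rw [G.dist_comm] at h3
    have h5 := peo hG (r := r) h1 h3 h2 (by omega)
    have := hJ.1 hy (hS (by simp : x ∈ _)) hyx
    omega
  choose J hJ1 hJ2 hJ3 using hJ
  have hRm : MaxDkIndep G k (R : Set V) := by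
    refine ⟨fun u hu v hv h => hR.1 u hu v hv h, fun J' h1 h2 => ?_⟩
    refine Set.Subset.antisymm (fun y hy => ?_) h2
    obtain ⟨v, hv, h3, -⟩ := hR.2 y
    by_cases hvy : v = y
    · exact hvy ▸ hv
    · have := h1 (h2 hv) hy hvy
      omega
  have hinj : Function.Injective J := by
    intro x x' h
    by_contra hne
    have hne' : x.1 ≠ x'.1 := fun h => hne (Subtype.ext h)
    have h1 := hJ3 x x'.1 (h ▸ hJ2 x') x'.2 hne'.symm
    have h2 := hJ3 x' x.1 (h ▸ hJ2 x) x.2 hne'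
    omega
  have hnR : (R : Set V) ∉ Set.range J := by
    rintro ⟨x, hx⟩
    exact x.2 (by have := hJ2 x; rw [hx] at this; exact this)
  have hcard : (insert (R : Set V) (Set.range J)).ncard = Fintype.card V - R.card + 1 := by
    rw [Set.ncard_insert_of_notMem hnR (Set.toFinite _), ← Set.image_univ,
      Set.ncard_image_of_injective _ hinj, Set.ncard_univ, Nat.card_eq_fintype_card,
      Fintype.card_subtype_compl]
    simp
  have hsub : insert (R : Set V) (Set.range J) ⊆ {J : Set V | MaxDkIndep G k J} := by
    rintro I (rfl | ⟨x, rfl⟩)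
    · exact hRm
    · exact hJ1 x
  have hle := Set.ncard_le_ncard hsub (Set.toFinite _)
  have hRc := Finset.card_le_univ R
  unfold mdi at hmdi
  refine ⟨by omega, ?_⟩
  have heq := Set.eq_of_subset_of_ncard_le hsub (by omega) (Set.toFinite _)
  intro x hx hmax
  have hU : ∀ y, k < G.dist x y → y ∈ J ⟨x, hx⟩ := by
    intro y hy
    obtain ⟨I, hI, hS⟩ := extend G k (S := {x, y}) (by
      rintro u (rfl | rfl) v (rfl | rfl) huv
      · exact absurd rfl huv
      · exact hy
      · rw [G.dist_comm]; exact hy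
      · exact absurd rfl huv)
    have hmem : I ∈ insert (R : Set V) (Set.range J) := by rw [heq]; exact hI
    rcases hmem with rfl | ⟨x', rfl⟩
    · exact absurd (hS (by simp : x ∈ _)) hx
    · by_cases h : x'.1 = x
      · have : x' = ⟨x, hx⟩ := Subtype.ext h
        rw [← this]; exact hS (by simp)
      · have := hJ3 x' x (hS (by simp)) hx (Ne.symm h)
        have := hmax x' x'.2
        omega
  intro y z hy hz hyz
  exact (hJ1 _).1 (hU y hy) (hU z hz) hyz

end KM


namespace KM

/-- The consequence of the counting argument. -/
def Good {V : Type*} [Fintype V] (G : SimpleGraph V) (m q : ℕ) : Prop :=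
  ∀ r : V, ∃ R, Greedy G (2 * m) r R ∧ R.card = q ∧ ∀ x ∉ R, (∀ x' ∉ R, G.dist r x' ≤ G.dist r x) →
      ∀ y z, 2 * m < G.dist x y → 2 * m < G.dist x z → y ≠ z → 2 * m < G.dist y z

theorem good_of_mdi {V : Type*} [Fintype V] {G : SimpleGraph V} (hG : G.IsTree) {m : ℕ}
    (hn : m + 1 ≤ Fintype.card V)
    (hmdi : mdi G (2 * m) + Fintype.card V / (m + 1) ≤ Fintype.card V + 1) :
    Good G m (Fintype.card V / (m + 1)) := by
  intro r
  obtain ⟨R, hR⟩ := exists_greedy G (2 * m) r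
  have h1 := card_indep hG m hn R hR.1
  have h2 : R.card ≤ Fintype.card V / (m + 1) := (Nat.le_div_iff_mul_le (by omega)).2 h1
  exact ⟨R, hR, counting hG hR h2 hmdi⟩

theorem diam_le {V : Type*} [Fintype V] {G : SimpleGraph V} (hG : G.IsTree) {m q : ℕ} (hm : 1 ≤ m)
    (h : Good G m q) (r y : V) : G.dist r y ≤ 2 * m + 2 := by
  classical
  by_contra hy
  obtain ⟨R, hR, -, hU⟩ := h r
  obtain ⟨p, hp1, hp2⟩ := geo hG r y (G.dist r y - 1) (by omega)
  have hex : ∃ x ∉ R, 2 * m + 2 ≤ G.dist r x := by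
    by_cases hyR : y ∈ R
    · refine ⟨p, fun hpR => ?_, by omega⟩
      have := hR.1 p hpR y hyR (by rintro rfl; omega)
      omega
    · exact ⟨y, hyR, by omega⟩
  obtain ⟨x0, hx0, hd0⟩ := hex
  obtain ⟨x, hx, hmax⟩ := (Finset.univ.filter (· ∉ R)).exists_max_image (G.dist r)
    ⟨x0, by simpa using hx0⟩
  simp only [Finset.mem_filter, Finset.mem_univ, true_and] at hx hmax
  have h0 := hmax x0 hx0
  obtain ⟨t, ht1, ht2⟩ := geo hG r x 1 (by omega)
  rw [G.dist_comm (u := t)] at ht2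
  have := hU x hx hmax r t (by rw [G.dist_comm]; omega) (by omega) (by rintro rfl; simp at ht1)
  omega

theorem exists_center {V : Type*} [Fintype V] {G : SimpleGraph V} (hG : G.IsTree) {m q : ℕ} (hm : 1 ≤ m)
    (h : Good G m q) : ∃ w, ∀ y, G.dist w y ≤ m + 1 := by
  have := hG.connected.nonempty
  obtain ⟨⟨a, b⟩, -, hmax⟩ := (Finset.univ : Finset (V × V)).exists_max_image (fun p => G.dist p.1 p.2)
    Finset.univ_nonempty
  have hD := diam_le hG hm h a b
  obtain ⟨w, h1, h2⟩ := geo hG a b (G.dist a b / 2) (by omega)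
  refine ⟨w, fun y => ?_⟩
  have e := G.dist_comm (u := b) (v := w)
  have h3 := hmax (a, y) (Finset.mem_univ _)
  have h4 := hmax (b, y) (Finset.mem_univ _)
  simp only at h3 h4
  rcases Kprop hG (a := a) (b := b) (t := w) (by omega) y with h | h <;> omega

theorem exists_br {V : Type*} {G : SimpleGraph V} (hG : G.IsTree) (w : V) :
    ∃ br : V → V, ∀ x, x ≠ w → G.dist w (br x) = 1 ∧ 1 + G.dist (br x) x = G.dist w x := by
  have : ∀ x, ∃ c, x ≠ w → G.dist w c = 1 ∧ 1 + G.dist c x = G.dist w x := by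
    intro x
    by_cases hx : x = w
    · exact ⟨w, fun h => absurd hx h⟩
    · have := hG.connected.pos_dist_of_ne (Ne.symm hx)
      obtain ⟨c, h1, h2⟩ := geo hG w x 1 (by omega)
      exact ⟨c, fun _ => ⟨h1, h2⟩⟩
  choose br h using this
  exact ⟨br, h⟩

def IsBr {V : Type*} (G : SimpleGraph V) (w : V) (br : V → V) : Prop :=
  ∀ x, x ≠ w → G.dist w (br x) = 1 ∧ 1 + G.dist (br x) x = G.dist w x

theorem br_same {V : Type*} {G : SimpleGraph V} (hG : G.IsTree) {w : V} {br : V → V}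
    (hb : IsBr G w br) {x y : V} (hx : x ≠ w) (hy : y ≠ w) (h : br x = br y) :
    G.dist x y + 2 ≤ G.dist w x + G.dist w y := by
  have h1 := (hb x hx).2
  have h2 := (hb y hy).2
  rw [h] at h1
  have := hG.connected.dist_triangle (u := x) (v := br y) (w := y)
  rw [G.dist_comm (u := x) (v := br y)] at this
  omega

theorem br_uniq {V : Type*} {G : SimpleGraph V} (hG : G.IsTree) {w c c' y : V}
    (h1 : G.dist w c = 1) (h2 : 1 + G.dist c y = G.dist w y)
    (h3 : G.dist w c' = 1) (h4 : 1 + G.dist c' y = G.dist w y) : c = c' := by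
  by_contra hne
  have e1 := G.dist_comm (u := c) (v := y)
  have e2 := G.dist_comm (u := c') (v := y)
  have e3 := G.dist_comm (u := w) (v := y)
  have h5 := peo hG (v := w) (u1 := c) (u2 := c') (r := y) (k := 1) (by omega) (by omega)
    (by omega) (by omega)
  have h6 := hG.connected.pos_dist_of_ne hne
  have h7 : G.Adj c c' := SimpleGraph.dist_eq_one_iff_adj.1 (by omega)
  rcases adj_dist hG h7 y <;> omega

theorem br_diff {V : Type*} {G : SimpleGraph V} (hG : G.IsTree) {w : V} {br : V → V}
    (hb : IsBr G w br) {x y : V} (hx : x ≠ w) (hy : y ≠ w) (h : br x ≠ br y) :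
    G.dist x y = G.dist w x + G.dist w y := by
  obtain ⟨h1, h2⟩ := hb x hx
  obtain ⟨h3, h4⟩ := hb y hy
  have e1 := G.dist_comm (u := br x) (v := y)
  have e2 := G.dist_comm (u := w) (v := y)
  have e3 := G.dist_comm (u := br x) (v := x)
  have hadj := SimpleGraph.dist_eq_one_iff_adj.1 h1
  rcases adj_dist hG hadj y with h5 | h5
  · exact absurd (br_uniq hG h1 (by omega) h3 h4) h
  · rcases Kprop hG (a := w) (b := x) (t := br x) (by omega) y with h6 | h6 <;> omega

theorem br_adj {V : Type*} {G : SimpleGraph V} (hG : G.IsTree) {w : V} {br : V → V}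
    (hb : IsBr G w br) {x y : V} (hx : x ≠ w) (hy : y ≠ w) (h : G.Adj x y) : br x = br y := by
  by_contra hne
  have h1 := br_diff hG hb hx hy hne
  have h2 := SimpleGraph.dist_eq_one_iff_adj.2 h
  have := hG.connected.pos_dist_of_ne hx.symm
  have := hG.connected.pos_dist_of_ne hy.symm
  omega

/-- points on the geodesic from `w` stay in the branch -/
theorem br_geo {V : Type*} {G : SimpleGraph V} (hG : G.IsTree) {w : V} {br : V → V}
    (hb : IsBr G w br) {x t : V} (hx : x ≠ w) (ht : t ≠ w) (h : G.dist w t + G.dist t x = G.dist w x) :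
    br t = br x := by
  by_contra hne
  have h1 := br_diff hG hb ht hx hne
  have := hG.connected.pos_dist_of_ne ht.symm
  omega

end KM


namespace KM

structure Ctx {V : Type*} [Fintype V] (G : SimpleGraph V) (m : ℕ) (w : V) (R : Finset V) (br : V → V) :
    Prop where
  tree : G.IsTree
  hm : 1 ≤ m
  ecc : ∀ y, G.dist w y ≤ m + 1
  hb : IsBr G w br
  gre : Greedy G (2 * m) w R
  U : ∀ x ∉ R, (∀ x' ∉ R, G.dist w x' ≤ G.dist w x) →
      ∀ y z, 2 * m < G.dist x y → 2 * m < G.dist x z → y ≠ z → 2 * m < G.dist y z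
  two : 2 ≤ R.card

open Classical in
noncomputable def Br {V : Type*} [Fintype V] (w : V) (br : V → V) (c : V) : Finset V :=
  Finset.univ.filter (fun x => x ≠ w ∧ br x = c)

theorem mem_Br {V : Type*} [Fintype V] {w : V} {br : V → V} {c x : V} :
    x ∈ Br w br c ↔ x ≠ w ∧ br x = c := by simp [Br]

section
variable {V : Type*} [Fintype V] {G : SimpleGraph V} {m : ℕ} {w : V} {R : Finset V} {br : V → V}

theorem Ctx.deep (h : Ctx G m w R br) {v : V} (hv : v ∈ R) : v ≠ w ∧ m ≤ G.dist w v := by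
  have h2 := h.two
  obtain ⟨u, hu, hne⟩ := Finset.exists_mem_ne (by omega : 1 < R.card) v
  have h1 := h.gre.1 v hv u hu hne.symm
  have h3 := h.tree.connected.dist_triangle (u := v) (v := w) (w := u)
  have h4 := h.ecc u
  have h5 := h.hm
  rw [G.dist_comm (u := v) (v := w)] at h3
  refine ⟨?_, by omega⟩
  rintro rfl
  simp at h3
  omega

theorem Ctx.shallow (h : Ctx G m w R br) {u v : V} (hu : u ∈ R) (hv : v ∈ R)
    (h1 : G.dist w u ≤ m) (h2 : G.dist w v ≤ m) : u = v := by
  by_contra hne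
  have h3 := h.gre.1 u hu v hv hne
  have h4 := h.tree.connected.dist_triangle (u := u) (v := w) (w := v)
  rw [G.dist_comm (u := u) (v := w)] at h4
  omega

theorem Ctx.inj (h : Ctx G m w R br) : Set.InjOn br (R : Set V) := by
  intro u hu v hv huv
  by_contra hne
  have h3 := h.gre.1 u hu v hv hne
  have h4 := br_same h.tree h.hb (h.deep hu).1 (h.deep hv).1 huv
  have := h.ecc u
  have := h.ecc v
  omega

theorem Ctx.clq_aux (h : Ctx G m w R br) {x y : V} (hx : x ∉ R) (hy : y ∉ R)
    (hd : G.dist w x = m + 1) : G.dist x y ≤ 2 * m := by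
  by_contra hxy
  have hm := h.hm
  have hG := h.tree
  have hxw : x ≠ w := by rintro rfl; simp at hd
  obtain ⟨v, hv, h1, h2⟩ := h.gre.2 y
  have hvy : v ≠ y := fun e => hy (e ▸ hv)
  have h3 : G.dist x v ≤ 2 * m := by
    by_contra h3
    have := h.U x hx (fun x' _ => hd ▸ h.ecc x') v y (by omega) (by omega) hvy
    omega
  have hvw := (h.deep hv).1
  have hvm := (h.deep hv).2
  have hve := h.ecc v
  rw [G.dist_comm] at h3
  by_cases h4 : G.dist w v = m + 1
  · have := peo hG (r := w) h3 h1 (by omega) (by omega)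
    omega
  · obtain ⟨v', hv', h5, h6⟩ := h.gre.2 x
    have hve' := h.ecc v'
    have hvw' := (h.deep hv').1
    have e1 : br v' = br x := by
      by_contra hne
      have := br_diff hG h.hb hvw' hxw hne
      omega
    have e2 : br v = br x := by
      by_contra hne
      have := br_diff hG h.hb hvw hxw hne
      omega
    have := h.inj hv hv' (e2.trans e1.symm)
    subst this
    omega

theorem Ctx.clq (h : Ctx G m w R br) {x y : V} (hx : x ∉ R) (hy : y ∉ R) : G.dist x y ≤ 2 * m := by
  by_cases h1 : G.dist w x = m + 1
  · exact h.clq_aux hx hy h1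
  by_cases h2 : G.dist w y = m + 1
  · rw [G.dist_comm]; exact h.clq_aux hy hx h2
  have h4 := h.tree.connected.dist_triangle (u := x) (v := w) (w := y)
  rw [G.dist_comm (u := x) (v := w)] at h4
  have := h.ecc x
  have := h.ecc y
  omega

theorem lev_sub (hG : G.IsTree) (hb : IsBr G w br) {x : V} (hx : x ≠ w) :
    Finset.Icc 1 (G.dist w x) ⊆ (Br w br (br x)).image (G.dist w) := by
  classical
  intro j hj
  rw [Finset.mem_Icc] at hj
  obtain ⟨t, h1, h2⟩ := geo hG w x j hj.2
  have ht : t ≠ w := by rintro rfl; simp at h1; omega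
  exact Finset.mem_image.2 ⟨t, mem_Br.2 ⟨ht, br_geo hG hb hx ht (by omega)⟩, h1⟩

theorem card_Br_ge (hG : G.IsTree) (hb : IsBr G w br) {x : V} (hx : x ≠ w) :
    G.dist w x ≤ (Br w br (br x)).card := by
  classical
  have h1 := Finset.card_le_card (lev_sub hG hb hx)
  have h2 := Finset.card_image_le (s := Br w br (br x)) (f := G.dist w)
  simp at h1
  omega

theorem sum_Br {A : Finset V} (hA : Set.InjOn br (A : Set V)) :
    ∑ v ∈ A, (Br w br (br v)).card + 1 ≤ Fintype.card V := by
  classical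
  rw [← Finset.card_biUnion]
  · have : A.biUnion (fun v => Br w br (br v)) ⊆ Finset.univ.erase w := by
      intro x hx
      obtain ⟨v, -, hv⟩ := Finset.mem_biUnion.1 hx
      simp [(mem_Br.1 hv).1]
    have h1 := Finset.card_le_card this
    rw [Finset.card_erase_of_mem (Finset.mem_univ w), Finset.card_univ] at h1
    have : 0 < Fintype.card V := Fintype.card_pos_iff.2 ⟨w⟩
    omega
  · intro x hx y hy hxy
    rw [Function.onFun, Finset.disjoint_left]
    intro z hz hz'
    exact hxy (hA hx hy ((mem_Br.1 hz).2.symm.trans (mem_Br.1 hz').2))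

open Classical in
theorem Ctx.split (h : Ctx G m w R br) : (R.filter (fun v => G.dist w v ≠ m + 1)).card ≤ 1 := by
  rw [Finset.card_le_one]
  intro a ha b hb
  simp only [Finset.mem_filter] at ha hb
  have := h.ecc a
  have := h.ecc b
  exact h.shallow ha.1 hb.1 (by omega) (by omega)

theorem Ctx.clean (h : Ctx G m w R br) {ρ : ℕ} (hn : Fintype.card V = R.card * (m + 1) + ρ) :
    ∃ C ⊆ R, (∀ l ∈ C, G.dist w l = m + 1 ∧ (Br w br (br l)).card ≤ m + 1) ∧
      R.card ≤ C.card + 1 + ρ := by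
  classical
  set P := R.filter (fun v => G.dist w v ≠ m + 1) with hP
  set L := R.filter (fun v => G.dist w v = m + 1) with hL
  set C := L.filter (fun v => (Br w br (br v)).card ≤ m + 1) with hC
  have hPc : P.card ≤ 1 := h.split
  refine ⟨C, fun l hl => (Finset.mem_filter.1 (Finset.mem_filter.1 hl).1).1, fun l hl => ?_, ?_⟩
  · simp only [hC, hL, Finset.mem_filter] at hl
    exact ⟨hl.1.2, hl.2⟩
  have hcLP : L.card + P.card = R.card := Finset.card_filter_add_card_filter_not _
  have hcLC : C.card + (L.filter (fun v => ¬ (Br w br (br v)).card ≤ m + 1)).card = L.card :=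
    Finset.card_filter_add_card_filter_not _
  set D := L.filter (fun v => ¬ (Br w br (br v)).card ≤ m + 1) with hD
  have hsum := sum_Br (w := w) h.inj
  rw [← Finset.sum_filter_add_sum_filter_not R (fun v => G.dist w v = m + 1), ← hL,
    ← Finset.sum_filter_add_sum_filter_not L (fun v => (Br w br (br v)).card ≤ m + 1), ← hC, ← hD] at hsum
  have s1 : C.card * (m + 1) ≤ ∑ v ∈ C, (Br w br (br v)).card := by
    rw [← smul_eq_mul]
    refine Finset.card_nsmul_le_sum _ _ _ (fun v hv => ?_)
    simp only [hC, hL, Finset.mem_filter] at hv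
    have := card_Br_ge h.tree h.hb (h.deep hv.1.1).1
    omega
  have s2 : D.card * (m + 2) ≤ ∑ v ∈ D, (Br w br (br v)).card := by
    rw [← smul_eq_mul]
    refine Finset.card_nsmul_le_sum _ _ _ (fun v hv => ?_)
    simp only [hD, hL, Finset.mem_filter] at hv
    omega
  have s3 : P.card * m ≤ ∑ v ∈ R with ¬ G.dist w v = m + 1, (Br w br (br v)).card := by
    rw [← smul_eq_mul]
    refine Finset.card_nsmul_le_sum _ _ _ (fun v hv => ?_)
    have hv' := (Finset.mem_filter.1 hv).1
    have := card_Br_ge h.tree h.hb (h.deep hv').1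
    have := (h.deep hv').2
    omega
  rw [← hcLP, ← hcLC] at hn
  rw [← hcLP, ← hcLC]
  have e1 : (C.card + D.card + P.card) * (m + 1) = C.card * (m + 1) + (D.card * (m + 2) - D.card) + (P.card * m + P.card) := by
    have : D.card * (m + 2) - D.card = D.card * (m + 1) := by
      rw [Nat.sub_eq_iff_eq_add (by nlinarith)]; ring
    rw [this]; ring
  have : D.card ≤ D.card * (m + 2) := by nlinarith
  omega

theorem Ctx.br_le (h : Ctx G m w R br) {ρ : ℕ} (hn : Fintype.card V = R.card * (m + 1) + ρ) {u : V} 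
    (hu : u ≠ w) : (Br w br (br u)).card ≤ m + 1 + ρ := by
  classical
  set A := R.filter (fun v => br v ≠ br u) with hA
  have hAc : R.card ≤ A.card + 1 := by
    have h1 : A.card + (R.filter (fun v => ¬ br v ≠ br u)).card = R.card := Finset.card_filter_add_card_filter_not _
    have h2 : (R.filter (fun v => ¬ br v ≠ br u)).card ≤ 1 := by
      rw [Finset.card_le_one]
      intro a ha b hb
      simp only [Finset.mem_filter, not_not] at ha hb
      exact h.inj ha.1 hb.1 (ha.2.trans hb.2.symm)
    omega
  have huA : u ∉ A := by simp [hA]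
  have hinj : Set.InjOn br ((insert u A : Finset V) : Set V) := by
    rw [Finset.coe_insert, Set.injOn_insert (by simpa using huA)]
    refine ⟨h.inj.mono (fun x hx => (Finset.mem_filter.1 hx).1), ?_⟩
    rintro ⟨x, hx, hx'⟩
    simp [hA] at hx
    exact hx.2 hx'
  have hsum := sum_Br (w := w) hinj
  rw [Finset.sum_insert huA] at hsum
  rw [← Finset.sum_filter_add_sum_filter_not A (fun v => G.dist w v = m + 1)] at hsum
  have hc : (A.filter (fun v => G.dist w v = m + 1)).card + (A.filter (fun v => ¬ G.dist w v = m + 1)).card = A.card := Finset.card_filter_add_card_filter_not _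
  have hPc : (A.filter (fun v => ¬ G.dist w v = m + 1)).card ≤ 1 := by
    refine le_trans (Finset.card_le_card ?_) h.split
    exact Finset.filter_subset_filter _ (Finset.filter_subset _ _)
  set A1 := A.filter (fun v => G.dist w v = m + 1) with hA1
  set A2 := A.filter (fun v => ¬ G.dist w v = m + 1) with hA2
  have s1 : A1.card * (m + 1) ≤ ∑ v ∈ A1, (Br w br (br v)).card := by
    rw [← smul_eq_mul]
    refine Finset.card_nsmul_le_sum _ _ _ (fun v hv => ?_)
    simp only [hA1, hA, Finset.mem_filter] at hv
    have := card_Br_ge h.tree h.hb (h.deep hv.1.1).1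
    omega
  have s3 : A2.card * m ≤ ∑ v ∈ A2, (Br w br (br v)).card := by
    rw [← smul_eq_mul]
    refine Finset.card_nsmul_le_sum _ _ _ (fun v hv => ?_)
    simp only [hA2, hA, Finset.mem_filter] at hv
    have := card_Br_ge h.tree h.hb (h.deep hv.1.1).1
    have := (h.deep hv.1.1).2
    omega
  have e1 : (A.card + 1) * (m + 1) = A1.card * (m + 1) + (A2.card * m + A2.card) + (m + 1) := by
    rw [← hc]; ring
  have e2 : R.card * (m + 1) ≤ (A.card + 1) * (m + 1) := Nat.mul_le_mul_right _ hAc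
  omega

end

end KM


namespace KM

theorem treeCrit {V : Type*} [Fintype V] {G : SimpleGraph V} (w : V) (par : V → V) (h : V → ℕ)
    (hadj : ∀ x y, G.Adj x y ↔ (x ≠ w ∧ par x = y) ∨ (y ≠ w ∧ par y = x))
    (hh : ∀ x, x ≠ w → h (par x) < h x) : G.IsTree := by
  classical
  have hreach : ∀ N x, h x ≤ N → G.Reachable x w := by
    intro N
    induction N with
    | zero =>
      intro x hx
      by_cases hxw : x = w
      · subst hxw; exact SimpleGraph.Reachable.refl _
      · have := hh x hxw; omega
    | succ N ih =>
      intro x hx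
      by_cases hxw : x = w
      · subst hxw; exact SimpleGraph.Reachable.refl _
      · have := hh x hxw
        have h1 : G.Adj x (par x) := (hadj _ _).2 (Or.inl ⟨hxw, rfl⟩)
        exact h1.reachable.trans (ih _ (by omega))
  have hconn : G.Connected := by
    have : Nonempty V := ⟨w⟩
    exact ⟨fun x y => (hreach _ x le_rfl).trans (hreach _ y le_rfl).symm⟩
  rw [SimpleGraph.isTree_iff_connected_and_card]
  refine ⟨hconn, le_antisymm ?_ hconn.card_vert_le_card_edgeSet_add_one⟩
  have hsub : G.edgeSet ⊆ (fun x => s(x, par x)) '' {x | x ≠ w} := by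
    intro e
    induction e with
    | h x y =>
      intro he
      rw [SimpleGraph.mem_edgeSet, hadj] at he
      rcases he with ⟨h1, h2⟩ | ⟨h1, h2⟩
      · exact ⟨x, h1, by simp [h2]⟩
      · exact ⟨y, h1, by simp [h2, Sym2.eq_swap]⟩
  have h1 := Set.ncard_le_ncard hsub (Set.toFinite _)
  have h2 := Set.ncard_image_le (s := {x | x ≠ w}) (f := fun x => s(x, par x)) (Set.toFinite _)
  have h3 : ({x | x ≠ w} : Set V).ncard + 1 = Nat.card V := by
    have := Set.ncard_add_ncard_compl ({w} : Set V)
    rw [Set.ncard_singleton] at this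
    rw [← this, add_comm]; rfl
  rw [← h3]
  rw [Nat.card_coe_set_eq]
  omega

theorem exists_par {V : Type*} {G : SimpleGraph V} (hG : G.IsTree) (w : V) :
    ∃ par : V → V, (∀ x y, G.Adj x y ↔ (x ≠ w ∧ par x = y) ∨ (y ≠ w ∧ par y = x)) ∧
      ∀ x, x ≠ w → G.dist w (par x) + 1 = G.dist w x := by
  have : ∀ x, ∃ p, x ≠ w → G.dist x p = 1 ∧ 1 + G.dist p w = G.dist x w := by
    intro x
    by_cases hx : x = w
    · exact ⟨w, fun h => absurd hx h⟩
    · have := hG.connected.pos_dist_of_ne hx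
      obtain ⟨c, h1, h2⟩ := geo hG x w 1 (by omega)
      exact ⟨c, fun _ => ⟨h1, h2⟩⟩
  choose par hp using this
  have key : ∀ x y, G.Adj x y → G.dist w x = G.dist w y + 1 → x ≠ w ∧ par x = y := by
    intro x y hxy hd
    have hx : x ≠ w := by rintro rfl; simp at hd
    refine ⟨hx, br_uniq hG (hp x hx).1 (hp x hx).2 (SimpleGraph.dist_eq_one_iff_adj.2 hxy) ?_⟩
    rw [G.dist_comm (u := y), G.dist_comm (u := x)]; omega
  refine ⟨par, fun x y => ⟨fun hxy => ?_, ?_⟩, fun x hx => ?_⟩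
  · rcases adj_dist hG hxy w with h | h
    · exact Or.inl (key x y hxy h)
    · exact Or.inr (key y x hxy.symm h)
  · rintro (⟨h1, rfl⟩ | ⟨h1, rfl⟩)
    · exact SimpleGraph.dist_eq_one_iff_adj.1 (hp x h1).1
    · exact (SimpleGraph.dist_eq_one_iff_adj.1 (hp y h1).1).symm
  · have := (hp x hx).2
    rw [G.dist_comm (u := w), G.dist_comm (u := w)]; omega

def multiLeg {W : Type*} (X : SimpleGraph W) (w : W) (ι : Type*) (s : ℕ) : SimpleGraph (W ⊕ ι × Fin s) where
  Adj a b := match a, b with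
    | Sum.inl x, Sum.inl y => X.Adj x y
    | Sum.inl x, Sum.inr p => x = w ∧ p.2.1 = 0
    | Sum.inr p, Sum.inl x => x = w ∧ p.2.1 = 0
    | Sum.inr p, Sum.inr p' => p.1 = p'.1 ∧ (p.2.1 + 1 = p'.2.1 ∨ p'.2.1 + 1 = p.2.1)
  symm := ⟨by
    rintro (x | p) (y | p') h
    · exact SimpleGraph.Adj.symm h
    · exact h
    · exact h
    · exact ⟨h.1.symm, h.2.symm⟩⟩
  loopless := ⟨by
    rintro (x | p) h
    · exact X.loopless.irrefl x h
    · have := h.2; omega⟩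

def multiLegIso {W W' : Type*} {X : SimpleGraph W} {X' : SimpleGraph W'} {w : W} {w' : W'}
    {ι ι' : Type*} (s : ℕ) (e : X ≃g X') (he : e w = w') (f : ι ≃ ι') :
    multiLeg X w ι s ≃g multiLeg X' w' ι' s where
  toEquiv := Equiv.sumCongr e.toEquiv (Equiv.prodCongr f (Equiv.refl _))
  map_rel_iff' := by
    subst he
    rintro (x | p) (y | p')
    · exact e.map_rel_iff'
    · simp [multiLeg]
    · simp [multiLeg]
    · simp [multiLeg]

theorem legRemoval {V : Type*} [Fintype V] {G : SimpleGraph V} (hG : G.IsTree) {w : V} {br : V → V}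
    (hb : IsBr G w br) {s : ℕ} (hs : 1 ≤ s) (C : Finset V)
    (hC : ∀ l ∈ C, G.dist w l = s ∧ (Br w br (br l)).card ≤ s) (hinj : Set.InjOn br (C : Set V)) :
    Nonempty (G ≃g multiLeg (G.induce {x | x = w ∨ ∀ l ∈ C, br x ≠ br l}) ⟨w, Or.inl rfl⟩ C s) := by
  classical
  have hCw : ∀ l ∈ C, l ≠ w := by
    rintro l hl rfl
    have := (hC l hl).1
    simp at this; omega
  have hlev : ∀ l ∈ C, Set.InjOn (G.dist w) (Br w br (br l) : Set V) ∧
      (Br w br (br l)).image (G.dist w) = Finset.Icc 1 s := by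
    intro l hl
    have h1 := lev_sub hG hb (hCw l hl)
    have h2 := Finset.card_image_le (s := Br w br (br l)) (f := G.dist w)
    have h3 := Finset.card_le_card h1
    rw [(hC l hl).1] at h1 h3
    have h4 := (hC l hl).2
    simp only [Nat.card_Icc] at h3
    refine ⟨Finset.injOn_of_card_image_eq (by omega), (Finset.eq_of_subset_of_card_le h1 ?_).symm⟩
    simp only [Nat.card_Icc]; omega
  have hpt : ∀ p : C × Fin s, ∃ t, t ∈ Br w br (br p.1) ∧ G.dist w t = p.2.1 + 1 := by
    rintro ⟨l, j⟩
    have : j.1 + 1 ∈ (Br w br (br l.1)).image (G.dist w) := by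
      rw [(hlev l.1 l.2).2, Finset.mem_Icc]; omega
    obtain ⟨t, h1, h2⟩ := Finset.mem_image.1 this
    exact ⟨t, h1, h2⟩
  choose f hf1 hf2 using hpt
  let F : ({x | x = w ∨ ∀ l ∈ C, br x ≠ br l} : Set V) ⊕ C × Fin s → V := Sum.elim Subtype.val f
  have hfw : ∀ p, f p ≠ w := fun p => (mem_Br.1 (hf1 p)).1
  have hfb : ∀ p, br (f p) = br p.1 := fun p => (mem_Br.1 (hf1 p)).2
  have hF : Function.Bijective F := by
    constructor
    · rintro (⟨x, hx⟩ | p) (⟨y, hy⟩ | p') h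
      · simp only [F, Sum.elim_inl] at h
        subst h; rfl
      · simp only [F, Sum.elim_inl, Sum.elim_inr] at h
        subst h
        rcases hx with hx | hx
        · exact absurd hx (hfw p')
        · exact absurd (hfb p') (hx _ p'.1.2)
      · simp only [F, Sum.elim_inl, Sum.elim_inr] at h
        subst h
        rcases hy with hx | hx
        · exact absurd hx (hfw p)
        · exact absurd (hfb p) (hx _ p.1.2)
      · simp only [F, Sum.elim_inr] at h
        have h1 : p.1 = p'.1 := by
          have : br p.1 = br p'.1 := by rw [← hfb, ← hfb, h]
          exact Subtype.ext (hinj p.1.2 p'.1.2 this)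
        have h2 : p.2 = p'.2 := by
          have := hf2 p
          rw [h, hf2] at this
          ext; omega
        rw [Prod.ext h1 h2]
    · intro x
      by_cases hx : x = w ∨ ∀ l ∈ C, br x ≠ br l
      · exact ⟨Sum.inl ⟨x, hx⟩, rfl⟩
      · push Not at hx
        obtain ⟨hxw, l, hl, hbl⟩ := hx
        have hxB : x ∈ Br w br (br l) := mem_Br.2 ⟨hxw, hbl⟩
        have : G.dist w x ∈ (Br w br (br l)).image (G.dist w) := Finset.mem_image_of_mem _ hxB
        rw [(hlev l hl).2, Finset.mem_Icc] at this
        refine ⟨Sum.inr (⟨l, hl⟩, ⟨G.dist w x - 1, by omega⟩), ?_⟩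
        simp only [F, Sum.elim_inr]
        refine (hlev l hl).1 (hf1 (⟨l, hl⟩, ⟨G.dist w x - 1, by omega⟩)) hxB ?_
        rw [hf2]; simp only; omega
  have hcross : ∀ (x : ({x | x = w ∨ ∀ l ∈ C, br x ≠ br l} : Set V)) (p : C × Fin s),
      G.Adj x.1 (f p) ↔ x.1 = w ∧ p.2.1 = 0 := by
    intro x p
    constructor
    · intro h
      have hxw : x.1 = w := by
        by_contra hxw
        rcases x.2 with h1 | h1
        · exact hxw h1
        · exact h1 _ p.1.2 ((br_adj hG hb hxw (hfw p) h).trans (hfb p))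
      refine ⟨hxw, ?_⟩
      rw [hxw] at h
      have := SimpleGraph.dist_eq_one_iff_adj.2 h
      rw [hf2] at this
      omega
    · rintro ⟨h1, h2⟩
      rw [h1]
      apply SimpleGraph.dist_eq_one_iff_adj.1
      rw [hf2, h2]
  have hstep : ∀ p p' : C × Fin s, p.1 = p'.1 → p.2.1 + 1 = p'.2.1 → G.Adj (f p) (f p') := by
    intro p p' h1 h2
    have hd := hf2 p'
    obtain ⟨t, ht1, ht2⟩ := geo hG w (f p') (p.2.1 + 1) (by omega)
    have htw : t ≠ w := by rintro rfl; simp at ht1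
    have hbt := br_geo hG hb (hfw p') htw (by omega)
    have htp : t = f p := by
      refine (hlev p.1 p.1.2).1 (mem_Br.2 ⟨htw, ?_⟩) (hf1 p) ?_
      · rw [hbt, hfb, h1]
      · rw [ht1, hf2]
    rw [← htp]
    apply SimpleGraph.dist_eq_one_iff_adj.1
    omega
  refine ⟨SimpleGraph.Iso.symm ⟨Equiv.ofBijective F hF, ?_⟩⟩
  rintro (x | p) (y | p')
  · simp [F, multiLeg]
  · simp only [Equiv.ofBijective_apply, F, Sum.elim_inl, Sum.elim_inr, multiLeg]
    rw [hcross]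
    simp [Subtype.ext_iff]
  · simp only [Equiv.ofBijective_apply, F, Sum.elim_inl, Sum.elim_inr, multiLeg]
    rw [G.adj_comm, hcross]
    simp [Subtype.ext_iff]
  · simp only [Equiv.ofBijective_apply, F, Sum.elim_inr, multiLeg]
    constructor
    · intro h
      have h1 : p.1 = p'.1 := by
        have := br_adj hG hb (hfw p) (hfw p') h
        rw [hfb, hfb] at this
        exact Subtype.ext (hinj p.1.2 p'.1.2 this)
      refine ⟨h1, ?_⟩
      have := adj_dist hG h w
      rw [hf2, hf2] at this
      omega
    · rintro ⟨h1, h2 | h2⟩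
      · exact hstep p p' h1 h2
      · exact (hstep p' p h1.symm h2).symm

end KM


namespace KM

def addLeaves {W : Type*} (X : SimpleGraph W) (w : W) (N : ℕ) : SimpleGraph (W ⊕ Fin N) where
  Adj a b := match a, b with
    | Sum.inl x, Sum.inl y => X.Adj x y
    | Sum.inl x, Sum.inr _ => x = w
    | Sum.inr _, Sum.inl x => x = w
    | Sum.inr _, Sum.inr _ => False
  symm := ⟨by
    rintro (x | p) (y | p') h
    · exact SimpleGraph.Adj.symm h
    · exact h
    · exact h
    · exact h⟩
  loopless := ⟨by
    rintro (x | p) h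
    · exact X.loopless.irrefl x h
    · exact h⟩

theorem addLeaves_tree {W : Type*} [Fintype W] {X : SimpleGraph W} (hX : X.IsTree) (w : W) (N : ℕ) :
    (addLeaves X w N).IsTree := by
  obtain ⟨par, h1, h2⟩ := exists_par hX w
  refine treeCrit (Sum.inl w) (Sum.elim (fun x => Sum.inl (par x)) (fun _ => Sum.inl w))
    (Sum.elim (fun x => X.dist w x) (fun _ => 1)) ?_ ?_
  · rintro (x | p) (y | p')
    · simp [addLeaves, h1]
    · simp [addLeaves, eq_comm]
    · simp [addLeaves, eq_comm]
    · simp [addLeaves]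
  · rintro (x | p) hx
    · have := h2 x (by rintro rfl; exact hx rfl)
      simp; omega
    · simp

theorem deg_iso {A B : Type*} {X : SimpleGraph A} {Y : SimpleGraph B} (e : X ≃g Y) (a : A) :
    (Y.neighborSet (e a)).ncard = (X.neighborSet a).ncard := by
  rw [← Nat.card_coe_set_eq, ← Nat.card_coe_set_eq]
  exact (Nat.card_congr (e.mapNeighborSet a)).symm

/-- the degree conditions under which leaves attached to `w` can be cancelled -/
def DegOK {W : Type*} (X : SimpleGraph W) (w : W) (N : ℕ) : Prop :=
  (∀ u, u ≠ w → (X.neighborSet u).ncard < (X.neighborSet w).ncard + N) ∧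
    2 ≤ (X.neighborSet w).ncard + N

theorem addLeaves_deg {W : Type*} [Finite W] {X : SimpleGraph W} {w : W} {N : ℕ} (h : DegOK X w N)
    (y : W ⊕ Fin N) (hy : y ≠ Sum.inl w) :
    ((addLeaves X w N).neighborSet y).ncard < ((addLeaves X w N).neighborSet (Sum.inl w)).ncard := by
  have hw : ((addLeaves X w N).neighborSet (Sum.inl w)).ncard = (X.neighborSet w).ncard + N := by
    have : (addLeaves X w N).neighborSet (Sum.inl w) =
        (Sum.inl '' X.neighborSet w) ∪ Set.range (Sum.inr : Fin N → W ⊕ Fin N) := by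
      ext (z | z)
      · simp [addLeaves, SimpleGraph.mem_neighborSet]
      · simp [addLeaves, SimpleGraph.mem_neighborSet]
    rw [this, Set.ncard_union_eq, Set.ncard_image_of_injective _ Sum.inl_injective,
      ← Set.image_univ, Set.ncard_image_of_injective _ Sum.inr_injective]
    · simp
    · rw [Set.disjoint_left]
      rintro _ ⟨a, -, rfl⟩ ⟨b, hb⟩
      simp at hb
  rw [hw]
  rcases y with u | p
  · have hu : u ≠ w := by rintro rfl; exact hy rfl
    have : (addLeaves X w N).neighborSet (Sum.inl u) = Sum.inl '' X.neighborSet u := by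
      ext (z | z)
      · simp [addLeaves, SimpleGraph.mem_neighborSet]
      · simp [addLeaves, SimpleGraph.mem_neighborSet, hu]
    rw [this, Set.ncard_image_of_injective _ Sum.inl_injective]
    exact h.1 u hu
  · have : (addLeaves X w N).neighborSet (Sum.inr p) = {Sum.inl w} := by
      ext (z | z)
      · simp [addLeaves, SimpleGraph.mem_neighborSet]
      · simp [addLeaves, SimpleGraph.mem_neighborSet]
    rw [this, Set.ncard_singleton]
    have := h.2
    omega

theorem cancel {W W' : Type*} [Finite W] [Finite W'] {X : SimpleGraph W} {X' : SimpleGraph W'}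
    {w : W} {w' : W'} {N : ℕ} (h : DegOK X w N) (h' : DegOK X' w' N)
    (φ : addLeaves X w N ≃g addLeaves X' w' N) : ∃ e : X ≃g X', e w = w' := by
  classical
  have := Fintype.ofFinite W
  have := Fintype.ofFinite W'
  have hφw : φ (Sum.inl w) = Sum.inl w' := by
    by_contra hne
    have h1 := addLeaves_deg h' _ hne
    have h2 : φ.symm (Sum.inl w') ≠ Sum.inl w := by
      intro hh; apply hne; rw [← hh]; simp
    have h3 := addLeaves_deg h _ h2
    rw [deg_iso] at h1 h3
    omega
  let F' : (W' ⊕ Fin N) → Prop := fun y => ∀ z, (addLeaves X' w' N).Adj y z ↔ z = Sum.inl w'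
  have hFr : ∀ i : Fin N, F' (Sum.inr i) := by
    rintro i (z | z)
    · simp [addLeaves]
    · simp [addLeaves]
  have hFφ : ∀ i : Fin N, F' (φ (Sum.inr i)) := by
    intro i z
    obtain ⟨z, rfl⟩ := φ.surjective z
    rw [φ.map_adj_iff, ← hφw, φ.injective.eq_iff]
    rcases z with z | z <;> simp [addLeaves]
  let P : {y // F' y} → Prop := fun y => ∃ i : Fin N, φ (Sum.inr i) = y.1
  let Q : {y // F' y} → Prop := fun y => ∃ i : Fin N, Sum.inr i = y.1
  let eP : Fin N ≃ {y // P y} := Equiv.ofBijective (fun i => ⟨⟨φ (Sum.inr i), hFφ i⟩, i, rfl⟩) (by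
    constructor
    · intro i j hij
      simpa using hij
    · rintro ⟨⟨y, hy⟩, i, hi⟩
      exact ⟨i, Subtype.ext (Subtype.ext hi)⟩)
  let eQ : Fin N ≃ {y // Q y} := Equiv.ofBijective (fun i => ⟨⟨Sum.inr i, hFr i⟩, i, rfl⟩) (by
    constructor
    · intro i j hij
      simpa using hij
    · rintro ⟨⟨y, hy⟩, i, hi⟩
      exact ⟨i, Subtype.ext (Subtype.ext hi)⟩)
  let σ0 : Equiv.Perm {y // F' y} := (eP.symm.trans eQ).extendSubtype
  have hσ0 : ∀ y, P y ↔ Q (σ0 y) := by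
    intro y
    constructor
    · intro hy
      exact Equiv.extendSubtype_mem _ y hy
    · intro hy
      by_contra hn
      exact Equiv.extendSubtype_not_mem (eP.symm.trans eQ) y hn hy
  let σ : Equiv.Perm (W' ⊕ Fin N) := Equiv.Perm.ofSubtype σ0
  have hσF : ∀ y (hy : F' y), σ y = (σ0 ⟨y, hy⟩).1 := fun y hy => Equiv.Perm.ofSubtype_apply_of_mem _ hy
  have hσn : ∀ y, ¬ F' y → σ y = y := fun y hy => Equiv.Perm.ofSubtype_apply_of_not_mem _ hy
  have hwF : ¬ F' (Sum.inl w') := by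
    intro hh
    exact ((addLeaves X' w' N).loopless.irrefl _) ((hh _).2 rfl)
  have hσw := hσn _ hwF
  have hσFi : ∀ y, F' y → F' (σ y) := by
    intro y hy
    rw [hσF y hy]; exact (σ0 ⟨y, hy⟩).2
  have hσw' : ∀ z, σ z = Sum.inl w' ↔ z = Sum.inl w' := by
    intro z
    constructor
    · intro hz; apply σ.injective; rw [hz, hσw]
    · rintro rfl; exact hσw
  have hσadj : ∀ y z, (addLeaves X' w' N).Adj (σ y) (σ z) ↔ (addLeaves X' w' N).Adj y z := by
    intro y z
    by_cases hy : F' y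
    · rw [hσFi y hy, hy, hσw']
    · by_cases hz : F' z
      · rw [(addLeaves X' w' N).adj_comm, (addLeaves X' w' N).adj_comm y, hσFi z hz, hz, hσw']
      · rw [hσn y hy, hσn z hz]
  have hψr : ∀ y, (∃ i, y = Sum.inr i) ↔ ∃ i, σ (φ y) = Sum.inr i := by
    intro y
    by_cases hy : F' (φ y)
    · have := hσ0 ⟨φ y, hy⟩
      rw [hσF _ hy]
      simp only [P, Q, φ.injective.eq_iff] at this
      constructor
      · rintro ⟨i, rfl⟩
        obtain ⟨j, hj⟩ := this.1 ⟨i, rfl⟩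
        exact ⟨j, hj.symm⟩
      · rintro ⟨i, hi⟩
        obtain ⟨j, hj⟩ := this.2 ⟨i, hi.symm⟩
        exact ⟨j, hj.symm⟩
    · rw [hσn _ hy]
      constructor
      · rintro ⟨i, rfl⟩
        exact absurd (hFφ i) hy
      · rintro ⟨i, hi⟩
        rw [hi] at hy
        exact absurd (hFr i) hy
  have hex : ∀ x : W, ∃ x' : W', σ (φ (Sum.inl x)) = Sum.inl x' := by
    intro x
    rcases hh : σ (φ (Sum.inl x)) with x' | i
    · exact ⟨x', rfl⟩
    · obtain ⟨j, hj⟩ := (hψr _).2 ⟨i, hh⟩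
      simp at hj
  choose g hg using hex
  have hgb : Function.Bijective g := by
    constructor
    · intro x y hxy
      have : σ (φ (Sum.inl x)) = σ (φ (Sum.inl y)) := by rw [hg, hg, hxy]
      simpa using this
    · intro x'
      obtain ⟨y, hy⟩ := σ.surjective (Sum.inl x')
      obtain ⟨z, rfl⟩ := φ.surjective y
      rcases z with z | i
      · refine ⟨z, ?_⟩
        rw [hg] at hy
        simpa using hy
      · obtain ⟨j, hj⟩ := (hψr (Sum.inr i)).1 ⟨i, rfl⟩
        rw [hj] at hy; simp at hy
  refine ⟨⟨Equiv.ofBijective g hgb, ?_⟩, ?_⟩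
  · intro x y
    have h1 : X'.Adj (g x) (g y) ↔ (addLeaves X' w' N).Adj (Sum.inl (g x)) (Sum.inl (g y)) := Iff.rfl
    have h2 : X.Adj x y ↔ (addLeaves X w N).Adj (Sum.inl x) (Sum.inl y) := Iff.rfl
    simp only [Equiv.ofBijective_apply]
    rw [h1, h2, ← hg, ← hg, hσadj, φ.map_adj_iff]
  · have : (Sum.inl (g w) : W' ⊕ Fin N) = Sum.inl w' := by rw [← hg, hφw, hσw]
    simpa using this

theorem numIso_le {n : ℕ} {β : Type*} (S : Set (SimpleGraph (Fin n))) (B : Set β) (hB : B.Finite)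
    (P : SimpleGraph (Fin n) → β → Prop) (h1 : ∀ T ∈ S, ∃ b ∈ B, P T b)
    (h2 : ∀ T ∈ S, ∀ T' ∈ S, ∀ b ∈ B, P T b → P T' b → Nonempty (T ≃g T')) :
    numIsoClasses S ≤ B.ncard := by
  classical
  unfold numIsoClasses
  have hch : ∀ c ∈ (fun G => Quotient.mk (graphSetoid n) G) '' S, ∃ b, b ∈ B ∧ ∃ T ∈ S,
      Quotient.mk (graphSetoid n) T = c ∧ P T b := by
    rintro _ ⟨T, hT, rfl⟩
    obtain ⟨b, hb, hP⟩ := h1 T hT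
    exact ⟨b, hb, T, hT, rfl, hP⟩
  rcases S.eq_empty_or_nonempty with rfl | ⟨T0, hT0⟩
  · simp
  have : Nonempty β := ⟨(h1 T0 hT0).choose⟩
  choose! f hf1 hf2 using hch
  refine Set.ncard_le_ncard_of_injOn f hf1 ?_ hB
  intro c hc c' hc' hcc
  obtain ⟨T, hT, rfl, hP⟩ := hf2 c hc
  obtain ⟨T', hT', rfl, hP'⟩ := hf2 c' hc'
  rw [← hcc] at hP'
  exact Quotient.sound (h2 T hT T' hT' _ (hf1 _ hc) hP hP')

/-- Main injection lemma. -/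
theorem injection {n M N a s : ℕ} (S : Set (SimpleGraph (Fin n)))
    (h : ∀ T ∈ S, ∃ (W : Type) (_ : Fintype W) (X : SimpleGraph W) (w : W), X.IsTree ∧
      Fintype.card W + N = M ∧ DegOK X w N ∧ Nonempty (T ≃g multiLeg X w (Fin a) s)) :
    numIsoClasses S ≤ numIsoClasses {T : SimpleGraph (Fin M) | T.IsTree} := by
  refine numIso_le S _ (Set.toFinite _) (fun T c => ∃ (W : Type) (_ : Fintype W) (X : SimpleGraph W) (w : W),
    DegOK X w N ∧ Nonempty (T ≃g multiLeg X w (Fin a) s) ∧ ∃ Y : SimpleGraph (Fin M),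
      Nonempty (Y ≃g addLeaves X w N) ∧ Quotient.mk (graphSetoid M) Y = c) ?_ ?_
  · intro T hT
    obtain ⟨W, iW, X, w, h1, h2, h3, h4⟩ := h T hT
    have hc : Fintype.card (W ⊕ Fin N) = M := by simp [h2]
    let e : Fin M ≃ W ⊕ Fin N := (Fintype.equivFinOfCardEq hc).symm
    let i : (addLeaves X w N).comap e ≃g addLeaves X w N := SimpleGraph.Iso.comap e _
    refine ⟨Quotient.mk (graphSetoid M) ((addLeaves X w N).comap e), ⟨_, ?_, rfl⟩, W, iW, X, w, h3, h4,
      _, ⟨i⟩, rfl⟩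
    exact i.isTree_iff.2 (addLeaves_tree h1 w N)
  · rintro T - T' - c - ⟨W, _, X, w, h1, ⟨h2⟩, Y, ⟨h3⟩, h4⟩ ⟨W', _, X', w', h1', ⟨h2'⟩, Y', ⟨h3'⟩, h4'⟩
    obtain ⟨g⟩ : Nonempty (Y ≃g Y') := Quotient.exact (h4.trans h4'.symm)
    obtain ⟨e, he⟩ := cancel h1 h1' ((h3.symm.trans g).trans h3')
    exact ⟨(h2.trans (multiLegIso s e he (Equiv.refl _))).trans h2'.symm⟩

end KM


namespace KM

theorem lipschitz {V : Type*} {G : SimpleGraph V} (hG : G.Connected) (f : V → ℤ)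
    (hf : ∀ x y, G.Adj x y → f x - f y ≤ 1) (x y : V) : f x - f y ≤ G.dist x y := by
  obtain ⟨p, hp⟩ := hG.exists_walk_length_eq_dist x y
  rw [← hp]
  clear hp
  induction p with
  | nil => simp
  | cons h p ih =>
    have := hf _ _ h
    rw [SimpleGraph.Walk.length_cons]
    push_cast
    omega

theorem rooted {V : Type*} [Fintype V] {G : SimpleGraph V} (w : V) (par : V → V) (h : V → ℕ)
    (hadj : ∀ x y, G.Adj x y ↔ (x ≠ w ∧ par x = y) ∨ (y ≠ w ∧ par y = x))
    (hw : h w = 0) (hh : ∀ x, x ≠ w → h (par x) + 1 = h x) : G.IsTree ∧ ∀ x, G.dist w x = h x := by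
  have hT : G.IsTree := treeCrit w par h hadj (fun x hx => by have := hh x hx; omega)
  refine ⟨hT, ?_⟩
  have hup : ∀ N x, h x ≤ N → G.dist w x ≤ h x := by
    intro N
    induction N with
    | zero =>
      intro x hx
      by_cases hxw : x = w
      · subst hxw; simp
      · have := hh x hxw; omega
    | succ N ih =>
      intro x hx
      by_cases hxw : x = w
      · subst hxw; simp
      · have h1 := hh x hxw
        have h2 := ih (par x) (by omega)
        have h3 : G.dist (par x) x = 1 :=
          SimpleGraph.dist_eq_one_iff_adj.2 ((hadj _ _).2 (Or.inr ⟨hxw, rfl⟩))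
        have h4 := hT.connected.dist_triangle (u := w) (v := par x) (w := x)
        omega
  intro x
  refine le_antisymm (hup _ x le_rfl) ?_
  have := lipschitz hT.connected (fun x => (h x : ℤ)) (by
    intro x y hxy
    rcases (hadj x y).1 hxy with ⟨h1, rfl⟩ | ⟨h1, rfl⟩
    · have := hh x h1; omega
    · have := hh y h1; omega) x w
  rw [hw, G.dist_comm] at this
  omega

theorem mdi_bound {V : Type*} [Fintype V] (G : SimpleGraph V) (k : ℕ) (L : Finset V) (e : V) (he : e ∉ L)
    (h1 : ∀ x ∉ L, ∀ y ∉ L, G.dist x y ≤ k) (h2 : ∀ x ∈ L, ∀ y ∈ L, x ≠ y → k < G.dist x y)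
    (h3 : ∀ x ∈ L, k < G.dist e x) : mdi G k + L.card ≤ Fintype.card V := by
  classical
  have hex : ∀ J ∈ {J : Set V | MaxDkIndep G k J}, ∃ x, x ∉ L ∧ x ∈ J := by
    intro J hJ
    by_contra hno
    push Not at hno
    have hJL : ∀ x ∈ J, x ∈ L := fun x hx => by
      by_contra h; exact hno x h hx
    have := hJ.2 (insert e J) (by
      rintro u (rfl | hu) v (rfl | hv) huv
      · exact absurd rfl huv
      · exact h3 v (hJL v hv)
      · rw [G.dist_comm]; exact h3 u (hJL u hu)
      · exact hJ.1 hu hv huv) (Set.subset_insert _ _)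
    have he' : e ∈ J := by rw [← this]; exact Set.mem_insert _ _
    exact he (hJL e he')
  have hdet : ∀ J, MaxDkIndep G k J → ∀ x ∉ L, x ∈ J → J = insert x {l | l ∈ L ∧ k < G.dist x l} := by
    intro J hJ x hx hxJ
    refine (hJ.2 _ ?_ ?_).symm
    · rintro u (rfl | hu) v (rfl | hv) huv
      · exact absurd rfl huv
      · exact hv.2
      · rw [G.dist_comm]; exact hu.2
      · exact h2 u hu.1 v hv.1 huv
    · intro y hy
      by_cases hxy : x = y
      · exact Or.inl hxy.symm
      · right
        have h4 := hJ.1 hxJ hy hxy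
        refine ⟨?_, h4⟩
        by_contra hyL
        have := h1 x hx y hyL
        omega
  have : Nonempty V := ⟨e⟩
  choose! f hf1 hf2 using hex
  have : mdi G k ≤ ((Lᶜ : Finset V) : Set V).ncard := by
    unfold mdi
    refine Set.ncard_le_ncard_of_injOn f (fun J hJ => by simpa using hf1 J hJ) ?_ (Set.toFinite _)
    intro J hJ J' hJ' hJJ
    rw [hdet J hJ _ (hf1 J hJ) (hf2 J hJ), hdet J' hJ' _ (hf1 J' hJ') (hf2 J' hJ'), hJJ]
  rw [Set.ncard_coe_finset, Finset.card_compl] at this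
  have := Finset.card_le_univ L
  omega

theorem mdi_iso {V W : Type*} {G : SimpleGraph V} {H : SimpleGraph W} (e : G ≃g H) (k : ℕ)
    (hG : G.Connected) : mdi G k ≤ mdi H k ∨ Infinite W := by
  by_cases hW : Infinite W
  · exact Or.inr hW
  left
  rw [not_infinite_iff_finite] at hW
  have hH : H.Connected := e.connected_iff.1 hG
  have hd : ∀ x y, H.dist (e x) (e y) = G.dist x y := by
    intro x y
    apply le_antisymm
    · obtain ⟨p, hp⟩ := hG.exists_walk_length_eq_dist x y
      rw [← hp, ← SimpleGraph.Walk.length_map e.toHom]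
      exact SimpleGraph.dist_le _
    · obtain ⟨p, hp⟩ := hH.exists_walk_length_eq_dist (e x) (e y)
      rw [← hp, ← SimpleGraph.Walk.length_map e.symm.toHom]
      have := SimpleGraph.dist_le (p.map e.symm.toHom)
      simpa using this
  have hI : ∀ J : Set V, DkIndep H k (e '' J) ↔ DkIndep G k J := by
    intro J
    constructor
    · intro h u hu v hv huv
      rw [← hd]
      exact h ⟨u, hu, rfl⟩ ⟨v, hv, rfl⟩ (fun h => huv (e.injective h))
    · rintro h _ ⟨u, hu, rfl⟩ _ ⟨v, hv, rfl⟩ huv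
      rw [hd]
      exact h hu hv (fun h => huv (by rw [h]))
  unfold mdi
  refine Set.ncard_le_ncard_of_injOn (fun J => e '' J) ?_ ?_ (Set.toFinite _)
  · intro J hJ
    refine ⟨(hI J).2 hJ.1, fun J' h1 h2 => ?_⟩
    have h3 : e '' (e ⁻¹' J') = J' := Set.image_preimage_eq _ e.surjective
    have h4 : e ⁻¹' J' = J := by
      apply hJ.2
      · rw [← hI, h3]; exact h1
      · intro x hx; exact h2 ⟨x, hx, rfl⟩
    rw [← h3, h4]
  · intro J _ J' _ h
    exact e.injective.image_injective h

theorem multiLeg_par {W : Type*} [Fintype W] {X : SimpleGraph W} (hX : X.IsTree) (w : W) {ι : Type*} [Fintype ι] (s : ℕ) :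
    (multiLeg X w ι s).IsTree ∧ ∀ x, (multiLeg X w ι s).dist (Sum.inl w) x =
      Sum.elim (fun x => X.dist w x) (fun p => p.2.1 + 1) x := by
  classical
  obtain ⟨par, h1, h2⟩ := exists_par hX w
  refine rooted (Sum.inl w) (Sum.elim (fun x => Sum.inl (par x))
    (fun p : ι × Fin s => if p.2.1 = 0 then Sum.inl w else Sum.inr (p.1, ⟨p.2.1 - 1, by omega⟩)))
    (Sum.elim (fun x => X.dist w x) (fun p : ι × Fin s => p.2.1 + 1)) ?_ (by simp) ?_
  · rintro (x | ⟨i, j⟩) (y | ⟨i', j'⟩)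
    · simp [multiLeg, h1]
    · simp only [multiLeg, Sum.elim_inl, Sum.elim_inr]
      by_cases h : j'.1 = 0 <;> simp [h, eq_comm]
    · simp only [multiLeg, Sum.elim_inl, Sum.elim_inr]
      by_cases h : j.1 = 0 <;> simp [h, eq_comm]
    · simp only [multiLeg, Sum.elim_inr]
      by_cases h : j.1 = 0 <;> by_cases h' : j'.1 = 0 <;> simp [h, h', Fin.ext_iff] <;> grind
  · rintro (x | ⟨i, j⟩) hx
    · exact h2 x (by rintro rfl; exact hx rfl)
    · by_cases h : j.1 = 0 <;> simp [h]
      omega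

theorem exists_core (m ρ : ℕ) (hm : 1 ≤ m) : ∃ (X : SimpleGraph (Fin (m + 1 + ρ))) (w e : Fin (m + 1 + ρ)),
    X.IsTree ∧ X.dist w e = m ∧ ∀ x, X.dist w x ≤ m := by
  let w : Fin (m + 1 + ρ) := ⟨0, by omega⟩
  let par : Fin (m + 1 + ρ) → Fin (m + 1 + ρ) := fun i => if i.1 ≤ m then ⟨i.1 - 1, by omega⟩ else w
  let h : Fin (m + 1 + ρ) → ℕ := fun i => if i.1 ≤ m then i.1 else 1
  let X : SimpleGraph (Fin (m + 1 + ρ)) := SimpleGraph.fromRel (fun x y => x ≠ w ∧ par x = y)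
  have hpar : ∀ x, x ≠ w → par x ≠ x := by
    intro x hx
    simp only [w, par, ne_eq, Fin.ext_iff] at hx ⊢
    split_ifs with h1 <;> simp <;> omega
  obtain ⟨h1, h2⟩ := rooted (G := X) w par h (by
    intro x y
    simp only [X, SimpleGraph.fromRel_adj]
    constructor
    · rintro ⟨-, h⟩; exact h
    · intro hh
      refine ⟨?_, hh⟩
      rintro rfl
      rcases hh with hh | hh
      · exact hpar _ hh.1 hh.2
      · exact hpar _ hh.1 hh.2) (by simp [h, w]) (by
    intro x hx
    simp only [w, par, h, ne_eq, Fin.ext_iff] at hx ⊢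
    by_cases h1 : x.1 ≤ m
    · rw [if_pos h1, if_pos h1, if_pos (show x.1 - 1 ≤ m by omega)]; simp only; omega
    · rw [if_neg h1, if_neg h1]; simp)
  refine ⟨X, w, ⟨m, by omega⟩, h1, ?_, ?_⟩
  · rw [h2]; simp [h]
  · intro x
    rw [h2]
    simp only [h]
    split_ifs <;> omega

theorem upper (m q ρ : ℕ) (hm : 1 ≤ m) (hq : 1 ≤ q) : ∃ T : SimpleGraph (Fin (q * (m + 1) + ρ)), T.IsTree ∧
    mdi T (2 * m) + q ≤ q * (m + 1) + ρ + 1 := by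
  classical
  obtain ⟨X, w, e, hX, he, hecc⟩ := exists_core m ρ hm
  obtain ⟨hT, hd⟩ := multiLeg_par hX w (ι := Fin (q - 1)) (m + 1)
  set Y := multiLeg X w (Fin (q - 1)) (m + 1) with hY
  let L : Finset (Fin (m + 1 + ρ) ⊕ Fin (q - 1) × Fin (m + 1)) :=
    Finset.univ.image (fun i : Fin (q - 1) => Sum.inr (i, Fin.last m))
  have hLc : L.card = q - 1 := by
    rw [Finset.card_image_of_injective]
    · simp
    · intro i j hij; simpa using hij
  have hlow : ∀ (i : Fin (q - 1)) y, (∀ j, y ≠ Sum.inr (i, j)) →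
      m + 1 + Y.dist (Sum.inl w) y ≤ Y.dist (Sum.inr (i, Fin.last m)) y := by
    intro i y hy
    have := lipschitz hT.connected (Sum.elim (fun x => -(X.dist w x : ℤ))
      (fun p => if p.1 = i then (p.2.1 + 1 : ℤ) else -(p.2.1 + 1 : ℤ))) (by
        rintro (x | ⟨a, j⟩) (y | ⟨a', j'⟩) hxy
        · have := adj_dist hX (x := x) (y := y) hxy w
          simp only [Sum.elim_inl]; omega
        · obtain ⟨h1, h2⟩ : x = w ∧ j'.1 = 0 := hxy
          subst h1
          simp only [Sum.elim_inl, Sum.elim_inr, h2]; split_ifs <;> simp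
        · obtain ⟨h1, h2⟩ : y = w ∧ j.1 = 0 := hxy
          subst h1
          simp only [Sum.elim_inl, Sum.elim_inr, h2]; split_ifs <;> simp
        · obtain ⟨h1, h2⟩ : a = a' ∧ (j.1 + 1 = j'.1 ∨ j'.1 + 1 = j.1) := hxy
          subst h1
          simp only [Sum.elim_inr]; split_ifs <;> omega) (Sum.inr (i, Fin.last m)) y
    rw [hd]
    rcases y with y | ⟨a, j⟩
    · simp at this ⊢; omega
    · have : a ≠ i := by rintro rfl; exact hy j rfl
      simp [this] at *; omega
  have hb := mdi_bound Y (2 * m) L (Sum.inl e) (by simp [L]) (by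
      have hs : ∀ x ∉ L, Y.dist (Sum.inl w) x ≤ m := by
        rintro (x | ⟨i, j⟩) hx
        · rw [hd]; exact hecc x
        · rw [hd]; simp only [Sum.elim_inr]
          by_contra hj
          have : j = Fin.last m := by ext; simp; omega
          exact hx (by simp [L, this])
      intro x hx y hy
      have := hT.connected.dist_triangle (u := x) (v := Sum.inl w) (w := y)
      rw [Y.dist_comm (u := x) (v := Sum.inl w)] at this
      have := hs x hx
      have := hs y hy
      omega) (by
      intro x hx y hy hxy
      simp only [L, Finset.mem_image, Finset.mem_univ, true_and] at hx hy
      obtain ⟨i, rfl⟩ := hx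
      obtain ⟨i', rfl⟩ := hy
      have := hlow i (Sum.inr (i', Fin.last m)) (by
        intro j hj
        simp at hj; exact hxy (by rw [hj.1]))
      rw [hd] at this
      simp at this; omega) (by
      intro x hx
      simp only [L, Finset.mem_image, Finset.mem_univ, true_and] at hx
      obtain ⟨i, rfl⟩ := hx
      have := hlow i (Sum.inl e) (by simp)
      rw [hd] at this
      simp only [Sum.elim_inl, he] at this
      rw [Y.dist_comm]; omega)
  have hcard : Fintype.card (Fin (m + 1 + ρ) ⊕ Fin (q - 1) × Fin (m + 1)) = q * (m + 1) + ρ := by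
    simp only [Fintype.card_sum, Fintype.card_prod, Fintype.card_fin]
    obtain ⟨p, rfl⟩ : ∃ p, q = p + 1 := ⟨q - 1, by omega⟩
    simp; ring
  let ε : Fin (q * (m + 1) + ρ) ≃ Fin (m + 1 + ρ) ⊕ Fin (q - 1) × Fin (m + 1) :=
    (Fintype.equivFinOfCardEq hcard).symm
  let i : Y.comap ε ≃g Y := SimpleGraph.Iso.comap ε _
  have ht : (Y.comap ε).IsTree := i.isTree_iff.2 hT
  refine ⟨Y.comap ε, ht, ?_⟩
  have hle : mdi (Y.comap ε) (2 * m) ≤ mdi Y (2 * m) := by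
    rcases mdi_iso i (2 * m) ht.connected with h | h
    · exact h
    · exact absurd h (by rw [not_infinite_iff_finite]; infer_instance)
  rw [hcard, hLc] at hb
  omega

end KM


namespace KM

theorem deg_pos {V : Type*} [Fintype V] {G : SimpleGraph V} (hG : G.IsTree) (h : 2 ≤ Fintype.card V) (w : V) :
    1 ≤ (G.neighborSet w).ncard := by
  have : Nontrivial V := Fintype.one_lt_card_iff_nontrivial.1 h
  obtain ⟨x, hx⟩ := exists_ne w
  have := hG.connected.pos_dist_of_ne hx.symm
  obtain ⟨t, h1, -⟩ := geo hG w x 1 (by omega)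
  have ht : t ∈ G.neighborSet w := SimpleGraph.dist_eq_one_iff_adj.1 h1
  exact (Set.ncard_pos (Set.toFinite _)).2 ⟨t, ht⟩

theorem case_small (n M : ℕ) (hn : 2 ≤ n) (hM : n ≤ M) (S : Set (SimpleGraph (Fin n)))
    (hS : ∀ T ∈ S, T.IsTree) : numIsoClasses S ≤ numIsoClasses {T : SimpleGraph (Fin M) | T.IsTree} := by
  rcases hM.eq_or_lt with rfl | hlt
  · exact Set.ncard_le_ncard (Set.image_mono hS) (Set.toFinite _)
  · refine injection (N := M - n) (a := 0) (s := 1) S (fun T hT => ?_)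
    have ht := hS T hT
    have : Nonempty (Fin n) := ⟨⟨0, by omega⟩⟩
    obtain ⟨w, -, hw⟩ := (Finset.univ : Finset (Fin n)).exists_max_image
      (fun v => (T.neighborSet v).ncard) Finset.univ_nonempty
    refine ⟨Fin n, inferInstance, T, w, ht, by simp; omega, ⟨fun u _ => ?_, ?_⟩, ⟨?_⟩⟩
    · have := hw u (Finset.mem_univ _)
      omega
    · have := deg_pos ht (by simpa using hn) w
      omega
    · refine ⟨(Equiv.sumEmpty (Fin n) (Fin 0 × Fin 1)).symm, ?_⟩
      intro x y
      simp [multiLeg]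

theorem br_br {V : Type*} {G : SimpleGraph V} (hG : G.IsTree) {w : V} {br : V → V}
    (hb : IsBr G w br) {c : V} (hc : G.dist w c = 1) : br c = c := by
  have hcw : c ≠ w := by rintro rfl; simp at hc
  have := (hb c hcw).2
  exact hG.connected.dist_eq_zero_iff.1 (by omega)

theorem core_tree {V : Type*} [Fintype V] {G : SimpleGraph V} (hG : G.IsTree) {w : V} {br : V → V}
    (hb : IsBr G w br) (C : Finset V) : (G.induce {x | x = w ∨ ∀ l ∈ C, br x ≠ br l}).IsTree := by
  classical
  obtain ⟨par, h1, h2⟩ := exists_par hG w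
  have hp : ∀ x : ({x | x = w ∨ ∀ l ∈ C, br x ≠ br l} : Set V), x.1 ≠ w →
      par x.1 = w ∨ ∀ l ∈ C, br (par x.1) ≠ br l := by
    rintro ⟨x, hx⟩ hxw
    simp only at hxw ⊢
    by_cases hpw : par x = w
    · exact Or.inl hpw
    · right
      have : br x = br (par x) := br_adj hG hb hxw hpw ((h1 _ _).2 (Or.inl ⟨hxw, rfl⟩))
      rw [← this]
      rcases hx with hx | hx
      · exact absurd hx hxw
      · exact hx
  refine treeCrit ⟨w, Or.inl rfl⟩ (fun x => if h : x.1 = w then x else ⟨par x.1, hp x h⟩)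
    (fun x => G.dist w x.1) ?_ ?_
  · rintro ⟨x, hx⟩ ⟨y, hy⟩
    simp only [SimpleGraph.comap_adj, Function.Embedding.subtype_apply, h1, ne_eq, Subtype.mk.injEq]
    by_cases hxw : x = w <;> by_cases hyw : y = w <;> simp [hxw, hyw]
  · rintro ⟨x, hx⟩ hxw
    have hxw' : x ≠ w := fun h => hxw (Subtype.ext h)
    simp only [hxw', dite_false]
    have := h2 x hxw'
    omega

theorem deg_le {V : Type*} [Fintype V] {G : SimpleGraph V} (hG : G.IsTree) {w : V} {br : V → V}
    (hb : IsBr G w br) {u : V} (hu : u ≠ w) : (G.neighborSet u).ncard ≤ (Br w br (br u)).card := by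
  classical
  have hsub : G.neighborSet u ⊆ (insert w ((Br w br (br u)).erase u) : Finset V) := by
    intro x hx
    have hx' : G.Adj u x := hx
    by_cases hxw : x = w
    · simp [hxw]
    · have h1 := br_adj hG hb hu hxw hx'
      simp only [Finset.coe_insert, Set.mem_insert_iff, Finset.mem_coe, Finset.mem_erase, mem_Br]
      exact Or.inr ⟨hx'.ne', hxw, h1.symm⟩
  have h1 := Set.ncard_le_ncard hsub (Set.toFinite _)
  rw [Set.ncard_coe_finset] at h1
  have h2 := Finset.card_insert_le w ((Br w br (br u)).erase u)
  have hmem : u ∈ Br w br (br u) := mem_Br.2 ⟨hu, rfl⟩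
  have h3 := Finset.card_erase_of_mem hmem
  have : 0 < (Br w br (br u)).card := Finset.card_pos.2 ⟨u, hmem⟩
  omega

theorem deg_induce {V : Type*} [Finite V] (G : SimpleGraph V) (A : Set V) (u : A) :
    ((G.induce A).neighborSet u).ncard ≤ (G.neighborSet u.1).ncard := by
  rw [← Set.ncard_image_of_injective _ Subtype.val_injective]
  refine Set.ncard_le_ncard ?_ (Set.toFinite _)
  rintro _ ⟨x, hx, rfl⟩
  exact hx

theorem case_big (m q ρ : ℕ) (hm : 2 ≤ m) (hρ : ρ ≤ m) (hbig : 4 * m ^ 2 + 1 ≤ q * (m + 1) + ρ)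
    (S : Set (SimpleGraph (Fin (q * (m + 1) + ρ))))
    (hS : ∀ T ∈ S, T.IsTree ∧ mdi T (2 * m) + q ≤ q * (m + 1) + ρ + 1) :
    numIsoClasses S ≤ numIsoClasses {T : SimpleGraph (Fin ((2 * m) ^ 2)) | T.IsTree} := by
  classical
  have hq : m + 1 ≤ q := by
    by_contra h
    have : q * (m + 1) ≤ m * (m + 1) := Nat.mul_le_mul_right _ (by omega)
    nlinarith
  have hn0 : (ρ + 1) * (m + 1) + ρ + (2 * m + 1) ≤ (2 * m) ^ 2 := by nlinarith
  refine injection (N := (2 * m) ^ 2 - ((ρ + 1) * (m + 1) + ρ)) (a := q - 1 - ρ) (s := m + 1) S ?_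
  intro T hT
  obtain ⟨hG, hmdi⟩ := hS T hT
  have hdiv : (q * (m + 1) + ρ) / (m + 1) = q := by
    rw [Nat.div_eq_of_lt_le] <;> nlinarith
  have hgood : Good T m q := by
    have := good_of_mdi hG (m := m) (by simp; nlinarith) (by simpa [hdiv] using hmdi)
    simpa [hdiv] using this
  obtain ⟨w, hw⟩ := exists_center hG (by omega) hgood
  obtain ⟨br, hb⟩ := exists_br hG w
  obtain ⟨R, hR, hRc, hU⟩ := hgood w
  have hctx : Ctx T m w R br := ⟨hG, by omega, hw, hb, hR, hU, by omega⟩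
  have hcard : Fintype.card (Fin (q * (m + 1) + ρ)) = R.card * (m + 1) + ρ := by simp [hRc]
  obtain ⟨C, hCR, hC, hCc⟩ := hctx.clean hcard
  obtain ⟨C', hC'C, hC'c⟩ := Finset.exists_subset_card_eq (show q - 1 - ρ ≤ C.card by omega)
  obtain ⟨iso⟩ := legRemoval hG hb (s := m + 1) (by omega) C' (fun l hl => hC l (hC'C hl))
    (hctx.inj.mono (fun x hx => hCR (hC'C hx)))
  have hXt := core_tree hG hb C'
  set A : Set (Fin (q * (m + 1) + ρ)) := {x | x = w ∨ ∀ l ∈ C', br x ≠ br l} with hA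
  have hAc : Fintype.card A = (ρ + 1) * (m + 1) + ρ := by
    have := Nat.card_congr iso.toEquiv
    rw [Nat.card_sum, Nat.card_prod] at this
    have e1 : Nat.card A = Fintype.card A := Nat.card_eq_fintype_card
    have e2 : Nat.card C' = q - 1 - ρ := by simp [hC'c]
    simp only [Nat.card_fin, e2] at this
    change _ = Nat.card A + _ at this
    have h2 : q * (m + 1) = (ρ + 1) * (m + 1) + (q - 1 - ρ) * (m + 1) := by
      rw [← add_mul]; congr 1; omega
    omega
  have hdw := deg_pos hXt (by rw [hAc]; nlinarith) ⟨w, Or.inl rfl⟩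
  refine ⟨A, inferInstance, T.induce A, ⟨w, Or.inl rfl⟩, hXt, by omega, ⟨?_, by omega⟩, ⟨?_⟩⟩
  · intro u hu
    have huw : u.1 ≠ w := fun h => hu (Subtype.ext h)
    have h1 := deg_induce T A u
    have h2 := deg_le hG hb huw
    have h3 := hctx.br_le hcard huw
    omega
  · exact iso.trans (multiLegIso (m + 1) (SimpleGraph.Iso.refl) rfl (C'.equivFinOfCardEq hC'c))

def StarAt {W : Type*} (X : SimpleGraph W) (w : W) : Prop :=
  ∀ x y, X.Adj x y ↔ (x = w ∧ y ≠ w) ∨ (x ≠ w ∧ y = w)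

theorem star_iso {W W' : Type*} {X : SimpleGraph W} {X' : SimpleGraph W'} {w : W} {w' : W'}
    (h : StarAt X w) (h' : StarAt X' w') (e : W ≃ W') : ∃ f : X ≃g X', f w = w' := by
  classical
  let g : W ≃ W' := e.trans (Equiv.swap (e w) w')
  have hg : g w = w' := by simp [g]
  have hgw : ∀ x, g x = w' ↔ x = w := fun x => by rw [← hg, g.injective.eq_iff]
  refine ⟨⟨g, ?_⟩, hg⟩
  intro x y
  rw [h, h', ne_eq, ne_eq, hgw, hgw]

theorem level_two {V : Type*} [Fintype V] {G : SimpleGraph V} {w : V} {R : Finset V} {br : V → V}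
    (h : Ctx G 1 w R br) {ρ : ℕ} (hρ : ρ ≤ 1) (hn : Fintype.card V = R.card * (1 + 1) + ρ)
    (hmax : ∀ w', (∀ y, G.dist w' y ≤ 2) → (G.neighborSet w').ncard ≤ (G.neighborSet w).ncard)
    {y : V} (hy : G.dist w y = 2) : y ∈ R := by
  classical
  by_contra hyR
  have hG := h.tree
  have hyw : y ≠ w := by rintro rfl; simp at hy
  obtain ⟨l, hl, hl1, hl2⟩ := h.gre.2 y
  have hle := h.ecc l
  have hlw := (h.deep hl).1
  have hdl : G.dist w l = 2 := by omega
  have hbly : br l = br y := by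
    by_contra hne
    have := br_diff hG h.hb hlw hyw hne
    omega
  -- all members of R at level two coincide with l
  have huniq : ∀ l' ∈ R, G.dist w l' = 2 → l' = l := by
    intro l' hl' hd'
    by_contra hne
    have hlw' := (h.deep hl').1
    have hbne : br l' ≠ br l := fun e => hne (h.inj hl' hl e)
    have hc := h.hb l' hlw'
    have hcR : br l' ∉ R := by
      intro hcR
      have := h.gre.1 _ hcR _ hl' (by intro e; rw [e] at hc; omega)
      omega
    have h1 := h.clq hcR hyR
    have hcw : br l' ≠ w := by intro e; rw [e] at hc; simp at hc
    have := br_diff hG h.hb hcw hyw (by rw [br_br hG h.hb hc.1, ← hbly]; exact hbne)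
    omega
  have hall : ∀ z, G.dist w z = 2 → br z = br l := by
    intro z hz
    have hzw : z ≠ w := by rintro rfl; simp at hz
    obtain ⟨v, hv, hv1, hv2⟩ := h.gre.2 z
    have := h.ecc v
    have hvl := huniq v hv (by omega)
    subst hvl
    by_contra hne
    have := br_diff hG h.hb hlw hzw (Ne.symm hne)
    omega
  have hcl := h.hb l hlw
  have hcy := h.hb y hyw
  rw [← hbly] at hcy
  set c := br l with hc
  have hRc : R.card ≤ 2 := by
    have h1 := h.split
    have h2 : (R.filter (fun v => G.dist w v = 1 + 1)).card + (R.filter (fun v => ¬ G.dist w v = 1 + 1)).card = R.card :=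
      Finset.card_filter_add_card_filter_not _
    have h3 : (R.filter (fun v => G.dist w v = 1 + 1)).card ≤ 1 := by
      rw [Finset.card_le_one]
      intro a ha b hb
      simp only [Finset.mem_filter] at ha hb
      rw [huniq a ha.1 ha.2, huniq b hb.1 hb.2]
    simp only [ne_eq] at h1
    omega
  have hecc : ∀ z, G.dist c z ≤ 2 := by
    intro z
    by_cases hz : G.dist w z = 2
    · have hzw : z ≠ w := by rintro rfl; simp at hz
      have := h.hb z hzw
      rw [hall z hz] at this
      omega
    · have := h.ecc z
      have := hG.connected.dist_triangle (u := c) (v := w) (w := z)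
      rw [G.dist_comm (u := c) (v := w)] at this
      omega
  have hly : l ≠ y := fun e => hyR (e ▸ hl)
  have hdeg : 3 ≤ (G.neighborSet c).ncard := by
    have hsub : (({w, l, y} : Finset V) : Set V) ⊆ G.neighborSet c := by
      intro x hx
      simp only [Finset.coe_insert, Finset.coe_singleton, Set.mem_insert_iff, Set.mem_singleton_iff] at hx
      apply SimpleGraph.dist_eq_one_iff_adj.1
      rcases hx with rfl | rfl | rfl
      · rw [G.dist_comm]; exact hcl.1
      · omega
      · omega
    have := Set.ncard_le_ncard hsub (Set.toFinite _)
    rw [Set.ncard_coe_finset, Finset.card_eq_three.2 ⟨w, l, y, hlw.symm, hyw.symm, hly, rfl⟩] at this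
    exact this
  have hdw := hmax c hecc
  have hdisj : Disjoint (({w, l, y} : Finset V) : Set V) (G.neighborSet w) := by
    rw [Set.disjoint_left]
    intro x hx hx'
    have hx1 : G.dist w x = 1 := SimpleGraph.dist_eq_one_iff_adj.2 hx'
    simp only [Finset.coe_insert, Finset.coe_singleton, Set.mem_insert_iff, Set.mem_singleton_iff] at hx
    rcases hx with rfl | rfl | rfl
    · simp at hx1
    · omega
    · omega
  have hu := Set.ncard_union_eq hdisj (Set.toFinite _) (Set.toFinite _)
  rw [Set.ncard_coe_finset, Finset.card_eq_three.2 ⟨w, l, y, hlw.symm, hyw.symm, hly, rfl⟩] at hu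
  have hle := Set.ncard_le_ncard (Set.subset_univ ((({w, l, y} : Finset V) : Set V) ∪ G.neighborSet w)) (Set.toFinite _)
  rw [Set.ncard_univ, Nat.card_eq_fintype_card] at hle
  omega

theorem two_le_four (M : ℕ) (hM : M = 4) : 2 ≤ numIsoClasses {T : SimpleGraph (Fin M) | T.IsTree} := by
  subst hM
  let pS : Fin 4 → Fin 4 := ![0, 0, 0, 0]
  let pP : Fin 4 → Fin 4 := ![0, 0, 1, 2]
  let A : SimpleGraph (Fin 4) := SimpleGraph.fromRel (fun x y => x ≠ 0 ∧ pS x = y)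
  let B : SimpleGraph (Fin 4) := SimpleGraph.fromRel (fun x y => x ≠ 0 ∧ pP x = y)
  have hA : A.IsTree := treeCrit 0 pS (fun i => i.1)
    (by simp only [A, SimpleGraph.fromRel_adj]; decide) (by decide)
  have hB : B.IsTree := treeCrit 0 pP (fun i => i.1)
    (by simp only [B, SimpleGraph.fromRel_adj]; decide) (by decide)
  have hA0 : ∀ v, v ≠ 0 → A.Adj 0 v := by simp only [A, SimpleGraph.fromRel_adj]; decide
  have hB0 : ∀ u, ∃ v, v ≠ u ∧ ¬ B.Adj u v := by simp only [B, SimpleGraph.fromRel_adj]; decide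
  unfold numIsoClasses
  rw [Nat.succ_le_iff, Set.one_lt_ncard (Set.toFinite _)]
  refine ⟨_, ⟨A, hA, rfl⟩, _, ⟨B, hB, rfl⟩, ?_⟩
  intro h
  obtain ⟨e⟩ : Nonempty (A ≃g B) := Quotient.exact h
  obtain ⟨v, hv, hv'⟩ := hB0 (e 0)
  obtain ⟨u, rfl⟩ := e.surjective v
  rw [e.map_adj_iff] at hv'
  exact hv' (hA0 u (by rintro rfl; exact hv rfl))

theorem case_two (q ρ : ℕ) (hq : 2 ≤ q) (hρ : ρ ≤ 1) 
    (S : Set (SimpleGraph (Fin (q * (1 + 1) + ρ))))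
    (hS : ∀ T ∈ S, T.IsTree ∧ mdi T (2 * 1) + q ≤ q * (1 + 1) + ρ + 1) :
    numIsoClasses S ≤ 2 := by
  classical
  have h2 : ({q - 1, q} : Set ℕ).ncard = 2 := Set.ncard_pair (by omega)
  rw [← h2]
  refine numIso_le S _ (Set.toFinite _) (fun T a => ∃ (W : Type) (_ : Fintype W) (X : SimpleGraph W) (w : W),
    StarAt X w ∧ Nonempty (T ≃g multiLeg X w (Fin a) 2)) ?_ ?_
  · intro T hT
    obtain ⟨hG, hmdi⟩ := hS T hT
    have hdiv : (q * (1 + 1) + ρ) / (1 + 1) = q := by omega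
    have hgood : Good T 1 q := by
      have := good_of_mdi hG (m := 1) (by simp; omega) (by simpa [hdiv] using hmdi)
      simpa [hdiv] using this
    obtain ⟨w0, hw0⟩ := exists_center hG le_rfl hgood
    obtain ⟨w, hw, hmax⟩ := (Finset.univ.filter (fun w => ∀ y, T.dist w y ≤ 2)).exists_max_image
      (fun v => (T.neighborSet v).ncard) ⟨w0, by simpa using hw0⟩
    simp only [Finset.mem_filter, Finset.mem_univ, true_and] at hw hmax
    obtain ⟨br, hb⟩ := exists_br hG w
    obtain ⟨R, hR, hRc, hU⟩ := hgood w
    have hctx : Ctx T 1 w R br := ⟨hG, le_rfl, hw, hb, hR, hU, by omega⟩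
    have hcard : Fintype.card (Fin (q * (1 + 1) + ρ)) = R.card * (1 + 1) + ρ := by simp [hRc]
    have hlev : ∀ y, T.dist w y = 2 → y ∈ R := fun y hy => level_two hctx hρ hcard hmax hy
    set L := R.filter (fun v => T.dist w v = 1 + 1) with hL
    have hLc : L.card ∈ ({q - 1, q} : Set ℕ) := by
      have h1 := hctx.split
      have h2 : L.card + (R.filter (fun v => ¬ T.dist w v = 1 + 1)).card = R.card :=
        Finset.card_filter_add_card_filter_not _
      simp only [ne_eq] at h1
      simp only [Set.mem_insert_iff, Set.mem_singleton_iff]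
      omega
    have hone : ∀ x, x ≠ w → T.dist w x = 1 ∨ T.dist w x = 2 := by
      intro x hx
      have := hG.connected.pos_dist_of_ne hx.symm
      have := hw x
      omega
    obtain ⟨iso⟩ := legRemoval hG hb (s := 2) (by omega) L (fun l hl => by
      have hl' := Finset.mem_filter.1 hl
      refine ⟨hl'.2, ?_⟩
      have : Br w br (br l) ⊆ {br l, l} := by
        intro x hx
        obtain ⟨hxw, hx⟩ := mem_Br.1 hx
        rcases hone x hxw with h | h
        · rw [br_br hG hb h] at hx
          simp [hx]
        · have := hctx.inj (hlev x h) hl'.1 hx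
          simp [this]
      exact (Finset.card_le_card this).trans (Finset.card_le_two))
      (hctx.inj.mono (fun x hx => (Finset.mem_filter.1 hx).1))
    refine ⟨L.card, hLc, ({x | x = w ∨ ∀ l ∈ L, br x ≠ br l} : Set (Fin (q * (1 + 1) + ρ))), inferInstance,
      T.induce _, ⟨w, Or.inl rfl⟩, ?_, ⟨iso.trans (multiLegIso 2 (SimpleGraph.Iso.refl) rfl L.equivFin)⟩⟩
    have hd1 : ∀ x : ({x | x = w ∨ ∀ l ∈ L, br x ≠ br l} : Set (Fin (q * (1 + 1) + ρ))), x.1 ≠ w →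
        T.dist w x.1 = 1 := by
      rintro ⟨x, hx⟩ hxw
      simp only at hxw ⊢
      rcases hone x hxw with h | h
      · exact h
      · rcases hx with hx | hx
        · exact absurd hx hxw
        · exact absurd rfl (hx x (Finset.mem_filter.2 ⟨hlev x h, h⟩))
    intro x y
    have hxe : x = ⟨w, Or.inl rfl⟩ ↔ x.1 = w := Subtype.ext_iff
    have hye : y = ⟨w, Or.inl rfl⟩ ↔ y.1 = w := Subtype.ext_iff
    rw [ne_eq, ne_eq, hxe, hye]
    simp only [SimpleGraph.comap_adj, Function.Embedding.subtype_apply]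
    by_cases hx : x.1 = w <;> by_cases hy : y.1 = w
    · simp [hx, hy]
    · simp only [hx, hy, not_false_eq_true, and_self, not_true_eq_false, or_false, iff_true]
      exact SimpleGraph.dist_eq_one_iff_adj.1 (hd1 y hy)
    · simp only [hx, hy, not_false_eq_true, and_self, not_true_eq_false, false_and, or_true, iff_true]
      exact (SimpleGraph.dist_eq_one_iff_adj.1 (hd1 x hx)).symm
    · simp only [hx, hy, false_and, and_false, or_false, iff_false]
      intro hadj
      have := adj_dist hG hadj w
      rw [hd1 x hx, hd1 y hy] at this
      omega
  · rintro T - T' - a - ⟨W, _, X, w, h1, ⟨h2⟩⟩ ⟨W', _, X', w', h1', ⟨h2'⟩⟩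
    have c1 := Fintype.card_congr h2.toEquiv
    have c2 := Fintype.card_congr h2'.toEquiv
    simp only [Fintype.card_sum, Fintype.card_prod, Fintype.card_fin] at c1 c2
    obtain ⟨f, hf⟩ := star_iso h1 h1' (Fintype.equivOfCardEq (by omega))
    exact ⟨(h2.trans (multiLegIso 2 f hf (Equiv.refl _))).trans h2'.symm⟩

end KM

theorem stmt_19 (n : ℕ) (hn : 2 ≤ n) (k : ℕ) (hk : 2 ≤ k) (hke : Even k) :
    numIsoClasses {T : SimpleGraph (Fin n) | T.IsTree ∧
        ∀ T' : SimpleGraph (Fin n), T'.IsTree → mdi T k ≤ mdi T' k} ≤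
      numIsoClasses {T : SimpleGraph (Fin (k ^ 2)) | T.IsTree} := by
  by_cases hsmall : n ≤ k ^ 2
  · exact KM.case_small n (k ^ 2) hn hsmall _ (fun T hT => hT.1)
  obtain ⟨m, rfl⟩ := even_iff_exists_two_mul.1 hke
  have hm : 1 ≤ m := by omega
  obtain ⟨q, ρ, rfl, hρ⟩ : ∃ q ρ, n = q * (m + 1) + ρ ∧ ρ ≤ m :=
    ⟨n / (m + 1), n % (m + 1), by rw [mul_comm]; exact (Nat.div_add_mod _ _).symm,
      Nat.lt_succ_iff.1 (Nat.mod_lt _ (by omega))⟩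
  have hbig : 4 * m ^ 2 + 1 ≤ q * (m + 1) + ρ := by
    have : (2 * m) ^ 2 = 4 * m ^ 2 := by ring
    omega
  have hq : 1 ≤ q := by
    rcases Nat.eq_zero_or_pos q with rfl | h
    · simp at hbig; nlinarith
    · exact h
  obtain ⟨T0, hT0, hmdi⟩ := KM.upper m q ρ hm hq
  by_cases hm2 : 2 ≤ m
  · refine KM.case_big m q ρ hm2 hρ hbig _ (fun T hT => ⟨hT.1, ?_⟩)
    have := hT.2 T0 hT0
    omega
  · obtain rfl : m = 1 := by omega
    refine (KM.case_two q ρ (by omega) hρ _ (fun T hT => ⟨hT.1, ?_⟩)).trans (KM.two_le_four _ (by norm_num))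
    have := hT.2 T0 hT0
    omega
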